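/- arXiv:2605.10742 — 9 statements merged into one kernel-verified Lean document; each statement's English description precedes it below -/
import Mathlib

section
/- Let H be a complex Hilbert space, let A be a bounded positive operator on H with m·I ≤ A ≤ M·I for some 0 < m ≤ M, and let x ∈ H be a unit vector. Then 0 ≤ re⟪A x, x⟫ − Δ_x(A) ≤ C(m,M), where C(m,M) := ((M−m)/(log M − log m))·log S(M/m) if m < M and C(m,M) := 0 if m = M, and S(h) := (h−1)·h^{1/(h−1)}/(e·log h) for h > 1 with S(1) := 1 is Specht's ratio. -/
noncomputable section

open ContinuousLinearMap

variable {H : Type*} [NormedAddCommGroup H] [InnerProductSpace ℂ H] [CompleteSpace H]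

/-- The operator logarithm, defined via the continuous functional calculus. -/
def opLog (A : H →L[ℂ] H) : H →L[ℂ] H := cfc Real.log A

/-- The Fujii–Seo determinant `Δ_x(A) = exp (re⟪(log A) x, x⟫)` of a strictly positive
operator `A` at a vector `x`. -/
def fsDet (A : H →L[ℂ] H) (x : H) : ℝ :=
  Real.exp ((opLog A).reApplyInnerSelf x)

/-- Specht's ratio `S(h) = (h - 1) * h ^ (1 / (h - 1)) / (e * log h)` for `h ≠ 1`,
with `S(1) = 1`. -/
def spechtRatio (h : ℝ) : ℝ :=
  if h = 1 then 1 else (h - 1) * h ^ ((1 : ℝ) / (h - 1)) / (Real.exp 1 * Real.log h)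

/-- The additive constant `C(m,M) = ((M - m)/(log M - log m)) * log S(M/m)` for `m < M`,
and `C(m,m) = 0`. -/
def fsAddConst (m M : ℝ) : ℝ :=
  if m = M then 0
  else ((M - m) / (Real.log M - Real.log m)) * Real.log (spechtRatio (M / m))

theorem fs_spec (A : H →L[ℂ] H) (m M : ℝ) 
    (hA : A.IsPositive)
    (hlow : (A - m • 1).IsPositive) (hupp : (M • 1 - A).IsPositive) (t : ℝ)
    (ht : t ∈ spectrum ℝ A) : m ≤ t ∧ t ≤ M := by
  have hsa : IsSelfAdjoint A := hA.isSelfAdjoint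
  constructor
  · refine (algebraMap_le_iff_le_spectrum (R := ℝ) (a := A) (r := m) hsa).1 ?_ t ht
    rw [ContinuousLinearMap.le_def, Algebra.algebraMap_eq_smul_one]
    exact hlow
  · refine (le_algebraMap_iff_spectrum_le (R := ℝ) (a := A) (r := M) hsa).1 ?_ t ht
    rw [ContinuousLinearMap.le_def, Algebra.algebraMap_eq_smul_one]
    exact hupp

theorem fs_key (A : H →L[ℂ] H) (m M : ℝ) (hm : 0 < m)
    (hA : A.IsPositive)
    (hlow : (A - m • 1).IsPositive) (hupp : (M • 1 - A).IsPositive)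
    (x : H) (hx : ‖x‖ = 1) (a b c : ℝ)
    (h : ∀ t, m ≤ t → t ≤ M → 0 ≤ a * Real.log t + b * t + c) :
    0 ≤ a * (opLog A).reApplyInnerSelf x + b * A.reApplyInnerSelf x + c := by
  have hsa : IsSelfAdjoint A := hA.isSelfAdjoint
  have hspec := fs_spec A m M hA hlow hupp
  have hlog : ContinuousOn Real.log (spectrum ℝ A) := fun t ht =>
    (Real.continuousAt_log (by linarith [(hspec t ht).1])).continuousWithinAt
  have h0 : 0 ≤ cfc (fun t : ℝ => a * Real.log t + b * t + c) A :=
    cfc_nonneg fun t ht => h t (hspec t ht).1 (hspec t ht).2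
  have h1 : cfc (fun t : ℝ => a * Real.log t + b * t + c) A
      = a • opLog A + b • A + c • (1 : H →L[ℂ] H) := by
    rw [cfc_add (a := A) (fun t : ℝ => a * Real.log t + b * t) (fun _ => c)
      (by fun_prop) (by fun_prop),
      cfc_add (a := A) (fun t : ℝ => a * Real.log t) (fun t => b * t)
      (by fun_prop) (by fun_prop), cfc_const_mul a Real.log A hlog,
      cfc_const_mul_id b A, cfc_const c A, Algebra.algebraMap_eq_smul_one]
    rfl
  rw [h1, ContinuousLinearMap.nonneg_iff_isPositive] at h0
  have h2 := h0.re_inner_nonneg_left x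
  have h3 : ∀ (r : ℝ) (v : H), r • v = (r : ℂ) • v := fun r v => (Complex.coe_smul r v).symm
  simp only [ContinuousLinearMap.add_apply, ContinuousLinearMap.smul_apply, inner_add_left,
    h3, inner_smul_left, ContinuousLinearMap.one_apply, inner_self_eq_norm_sq_to_K, hx] at h2
  simpa [ContinuousLinearMap.reApplyInnerSelf] using h2

theorem fs_upper (m M D a L : ℝ) (hm : 0 < m) (hD : 0 < D)
    (h : 0 ≤ 1 * L + (-1 / D) * a + (m / D - Real.log m)) :
    a - Real.exp L ≤ D * (m / D - 1 - Real.log m + Real.log D) := by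
  have h1 : a ≤ m + D * (L - Real.log m) := by
    have := mul_nonneg hD.le h
    field_simp at this
    linarith
  have h2 : D * (L - Real.log D + 1) ≤ Real.exp L := by
    have := mul_le_mul_of_nonneg_left (Real.add_one_le_exp (L - Real.log D)) hD.le
    rwa [Real.exp_sub, Real.exp_log hD, mul_div_cancel₀ _ hD.ne'] at this
  have h3 : D * (m / D) = m := by field_simp
  linarith

theorem fs_chord (m M t : ℝ) (hm : 0 < m) (hmM : m < M) (h1 : m ≤ t) (h2 : t ≤ M) :
    Real.log m + (t - m) * ((Real.log M - Real.log m) / (M - m)) ≤ Real.log t := by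
  have hd : 0 < M - m := by linarith
  have := strictConcaveOn_log_Ioi.concaveOn.2 (show m ∈ Set.Ioi (0 : ℝ) from hm)
    (show M ∈ Set.Ioi (0 : ℝ) from hm.trans hmM)
    (show 0 ≤ (M - t) / (M - m) from div_nonneg (by linarith) hd.le)
    (show 0 ≤ (t - m) / (M - m) from div_nonneg (by linarith) hd.le) (by field_simp; ring)
  simp only [smul_eq_mul] at this
  have e : (M - t) / (M - m) * m + (t - m) / (M - m) * M = t := by field_simp; ring
  rw [e] at this
  refine le_trans (le_of_eq ?_) this
  field_simp; ring

/-- If `0 < m ≤ M`, `m • I ≤ A ≤ M • I` and `x` is a unit vector, then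
`0 ≤ re⟪A x, x⟫ - Δ_x(A) ≤ C(m, M)`. -/
theorem fujiiSeo_additive_reverse_inequality
    (A : H →L[ℂ] H) (m M : ℝ) (hm : 0 < m) (hmM : m ≤ M)
    (hA : A.IsPositive)
    (hlow : (A - m • 1).IsPositive) (hupp : (M • 1 - A).IsPositive)
    (x : H) (hx : ‖x‖ = 1) :
    0 ≤ A.reApplyInnerSelf x - fsDet A x ∧
      A.reApplyInnerSelf x - fsDet A x ≤ fsAddConst m M := by
  have key := fs_key A m M hm hA hlow hupp x hx
  set a := A.reApplyInnerSelf x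
  unfold fsDet
  set L := (opLog A).reApplyInnerSelf x
  have ham : m ≤ a := by
    have := key 0 1 (-m) (fun t h1 h2 => by linarith)
    linarith
  have ha : 0 < a := by linarith
  constructor
  · have h := key (-1) (1 / a) (Real.log a - 1) (fun t h1 h2 => by
      have ht : 0 < t := by linarith
      have := Real.log_le_sub_one_of_pos (div_pos ht ha)
      rw [Real.log_div ht.ne' ha.ne'] at this
      have e : 1 / a * t = t / a := by ring
      linarith)
    have e : 1 / a * a = 1 := by field_simp
    have h' : L ≤ Real.log a := by linarith
    have := Real.exp_le_exp.2 h'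
    rw [Real.exp_log ha] at this
    linarith
  · unfold fsAddConst
    split_ifs with hc
    · have h := fs_upper m M m a L hm hm (key _ _ _ fun t h1 h2 => by
        have : t = m := by linarith
        subst this
        field_simp
        ring_nf
        rfl)
      have e : m / m = 1 := by field_simp
      rw [e] at h
      linarith
    · have hlt : m < M := lt_of_le_of_ne hmM hc
      have hM : 0 < M := by linarith
      have hl : 0 < Real.log M - Real.log m := by linarith [Real.log_lt_log hm hlt]
      have hd : 0 < M - m := by linarith
      have hD : 0 < (M - m) / (Real.log M - Real.log m) := by positivity
      refine (fs_upper m M _ a L hm hD (key _ _ _ fun t h1 h2 => ?_)).trans (le_of_eq ?_)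
      · have := fs_chord m M t hm hlt h1 h2
        have e : 1 * Real.log t + -1 / ((M - m) / (Real.log M - Real.log m)) * t
          + (m / ((M - m) / (Real.log M - Real.log m)) - Real.log m) = Real.log t -
          (Real.log m + (t - m) * ((Real.log M - Real.log m) / (M - m))) := by
          field_simp; ring
        linarith
      · congr 1
        have hne : M / m ≠ 1 := by
          intro h; rw [div_eq_one_iff_eq hm.ne'] at h; exact hc h.symm
        have e1 : M / m - 1 = (M - m) / m := by field_simp
        have hp : 0 < M / m := by positivity
        have hlr : Real.log (M / m) = Real.log M - Real.log m := Real.log_div hM.ne' hm.ne'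
        rw [spechtRatio, if_neg hne, e1, hlr, Real.log_div hd.ne' hl.ne',
          Real.log_div (x := _ * _) (by positivity) (by positivity),
          Real.log_mul (by positivity) (by positivity), Real.log_mul (by positivity) hl.ne',
          Real.log_rpow hp, Real.log_exp, hlr, Real.log_div hd.ne' hm.ne']
        have e2 : 1 / ((M - m) / m) * (Real.log M - Real.log m)
          = m / ((M - m) / (Real.log M - Real.log m)) := by field_simp
        rw [e2]; ring
end
end

section
/- Let H be a nontrivial complex Hilbert space and let A be a bounded positive operator on H. The following are equivalent: (1) the infimum over unit vectors x of Δ_x(A) equals 0; (2) the infimum over unit vectors x of re⟪A x, x⟫ equals 0; (3) there is a sequence (x_n) of unit vectors with re⟪A x_n, x_n⟫ → 0; (4) there is a sequence (x_n) of unit vectors with ‖A x_n‖ → 0; (5) 0 belongs to the spectrum of A; (6) A is not invertible in the algebra of bounded operators on H. -/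
noncomputable section

open ContinuousLinearMap

variable {H : Type*} [NormedAddCommGroup H] [InnerProductSpace ℂ H] [CompleteSpace H]

/-- The Fujii–Seo determinant of a (possibly non-invertible) positive operator,
defined as `⨅ ε > 0, Δ_x(A + ε • 1)`. -/
def fsDet₀ (A : H →L[ℂ] H) (x : H) : ℝ :=
  ⨅ ε : {ε : ℝ // 0 < ε}, fsDet (A + (ε : ℝ) • 1) x

lemma rais_mono {S T : H →L[ℂ] H} (h : S ≤ T) (x : H) :
    S.reApplyInnerSelf x ≤ T.reApplyInnerSelf x := by
  have h1 := ((le_def S T).1 h).re_inner_nonneg_left x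
  simp only [sub_apply, inner_sub_left, map_sub] at h1
  simp only [reApplyInnerSelf_apply]
  linarith

lemma rais_algebraMap (r : ℝ) (x : H) :
    (algebraMap ℝ (H →L[ℂ] H) r).reApplyInnerSelf x = r * ‖x‖ ^ 2 := by
  rw [reApplyInnerSelf_apply, Algebra.algebraMap_eq_smul_one,
    ← algebraMap_smul ℂ r (1 : (H →L[ℂ] H)), smul_apply,
    one_apply_eq_self, inner_smul_left, RCLike.algebraMap_eq_ofReal, RCLike.conj_ofReal,
    RCLike.re_ofReal_mul, inner_self_eq_norm_sq]

lemma rais_smul (r : ℝ) (T : H →L[ℂ] H) (x : H) :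
    (r • T).reApplyInnerSelf x = r * T.reApplyInnerSelf x := by
  rw [reApplyInnerSelf_apply, reApplyInnerSelf_apply,
    ← algebraMap_smul ℂ r T, smul_apply,
    inner_smul_left, RCLike.algebraMap_eq_ofReal, RCLike.conj_ofReal,
    RCLike.re_ofReal_mul]

lemma rais_add (S T : H →L[ℂ] H) (x : H) :
    (S + T).reApplyInnerSelf x = S.reApplyInnerSelf x + T.reApplyInnerSelf x := by
  simp [reApplyInnerSelf_apply, inner_add_left]

lemma rais_nonneg {A : H →L[ℂ] H} (hA : A.IsPositive) (x : H) : 0 ≤ A.reApplyInnerSelf x :=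
  hA.re_inner_nonneg_left x

lemma fsDet_lower {B : H →L[ℂ] H} {m : ℝ} (hm : 0 < m) (hB : IsSelfAdjoint B)
    (h : algebraMap ℝ (H →L[ℂ] H) m ≤ B) {x : H} (hx : ‖x‖ = 1) : m ≤ fsDet B x := by
  have hs := (algebraMap_le_iff_le_spectrum (R := ℝ) hB).1 h
  have h1 : algebraMap ℝ (H →L[ℂ] H) (Real.log m) ≤ cfc Real.log B :=
    algebraMap_le_cfc Real.log _ B (fun t ht => Real.log_le_log hm (hs t ht))
      (Real.continuousOn_log.mono fun t ht => (hm.trans_le (hs t ht)).ne') hB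
  have h2 := rais_mono h1 x
  rw [rais_algebraMap, hx] at h2
  unfold fsDet opLog
  rw [← Real.log_le_iff_le_exp hm]
  linarith

lemma fsDet_upper {B : H →L[ℂ] H} {m c : ℝ} (hm : 0 < m) (hB : IsSelfAdjoint B)
    (h : algebraMap ℝ (H →L[ℂ] H) m ≤ B) {x : H} (hx : ‖x‖ = 1) (hc : 0 < c)
    (hBc : B.reApplyInnerSelf x ≤ c) : fsDet B x ≤ c := by
  have hs := (algebraMap_le_iff_le_spectrum (R := ℝ) hB).1 h
  have h1 : cfc Real.log B ≤ cfc (fun t : ℝ => c⁻¹ * t + (Real.log c - 1)) B := by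
    refine cfc_mono (fun t ht => ?_)
      (Real.continuousOn_log.mono fun t ht => (hm.trans_le (hs t ht)).ne') (by fun_prop)
    have ht := hm.trans_le (hs t ht)
    have := Real.log_le_sub_one_of_pos (mul_pos (inv_pos.2 hc) ht)
    rw [Real.log_mul (inv_pos.2 hc).ne' ht.ne', Real.log_inv] at this
    linarith
  rw [cfc_add_const _ _ B (by fun_prop) hB, cfc_const_mul_id _ B hB] at h1
  have h2 := rais_mono h1 x
  rw [rais_add, rais_smul, rais_algebraMap, hx] at h2
  have h3 : c⁻¹ * B.reApplyInnerSelf x ≤ 1 := by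
    rw [inv_mul_le_iff₀ hc]; linarith
  unfold fsDet opLog
  rw [← Real.le_log_iff_exp_le hc]
  linarith

lemma algebraMap_le_of_rais {A : H →L[ℂ] H} (hA : A.IsPositive) {m : ℝ}
    (h : ∀ x : H, ‖x‖ = 1 → m ≤ A.reApplyInnerSelf x) : algebraMap ℝ (H →L[ℂ] H) m ≤ A := by
  rw [le_def, isPositive_def']
  refine ⟨hA.isSelfAdjoint.sub (IsSelfAdjoint.algebraMap _ (.all m)), fun x => ?_⟩
  rw [sub_eq_add_neg, ← map_neg, rais_add, rais_algebraMap]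
  by_cases hx : x = 0
  · simp [hx, reApplyInnerSelf_apply]
  have hn : 0 < ‖x‖ := norm_pos_iff.2 hx
  have h1 := h ((‖x‖⁻¹ : ℂ) • x) (by
    rw [norm_smul, norm_inv, Complex.norm_real, norm_norm, inv_mul_cancel₀ hn.ne'])
  rw [reApplyInnerSelf_smul] at h1
  rw [norm_inv, Complex.norm_real, norm_norm, inv_pow, ← div_eq_inv_mul,
    le_div_iff₀ (by positivity)] at h1
  linarith

/-- For a positive operator `A` on a nontrivial Hilbert space, the six
degeneracy conditions are equivalent. -/
theorem fujiiSeo_degeneracy_tfae [Nontrivial H] (A : H →L[ℂ] H) (hA : A.IsPositive) :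
    List.TFAE
      [ (⨅ x : {x : H // ‖x‖ = 1}, fsDet₀ A (x : H)) = 0,
        (⨅ x : {x : H // ‖x‖ = 1}, A.reApplyInnerSelf (x : H)) = 0,
        ∃ x : ℕ → H, (∀ n, ‖x n‖ = 1) ∧
          Filter.Tendsto (fun n => A.reApplyInnerSelf (x n)) Filter.atTop (nhds 0),
        ∃ x : ℕ → H, (∀ n, ‖x n‖ = 1) ∧
          Filter.Tendsto (fun n => ‖A (x n)‖) Filter.atTop (nhds 0),
        (0 : ℝ) ∈ spectrum ℝ A,
        ¬ IsUnit A ] := by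
  have hne : Nonempty {x : H // ‖x‖ = 1} := by
    obtain ⟨x, hx⟩ := exists_norm_eq H zero_le_one
    exact ⟨⟨x, hx⟩⟩
  have hbdd : BddBelow (Set.range fun x : {x : H // ‖x‖ = 1} => A.reApplyInnerSelf (x : H)) :=
    ⟨0, by rintro _ ⟨x, rfl⟩; exact rais_nonneg hA _⟩
  have hA0 : (0 : H →L[ℂ] H) ≤ A := (nonneg_iff_isPositive A).2 hA
  have hsa : ∀ ε : ℝ, IsSelfAdjoint (A + ε • (1 : H →L[ℂ] H)) := fun ε => by
    rw [← Algebra.algebraMap_eq_smul_one]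
    exact hA.isSelfAdjoint.add (IsSelfAdjoint.algebraMap _ (.all ε))
  have hfb : ∀ x : H, BddBelow (Set.range fun ε : {ε : ℝ // 0 < ε} =>
      fsDet (A + (ε : ℝ) • 1) x) := fun x =>
    ⟨0, by rintro _ ⟨ε, rfl⟩; exact (Real.exp_pos _).le⟩
  have hnε : Nonempty {ε : ℝ // 0 < ε} := ⟨⟨1, one_pos⟩⟩
  have hf0 : ∀ x : H, 0 ≤ fsDet₀ A x := fun x => le_ciInf fun ε => (Real.exp_pos _).le
  have hinf0 : 0 ≤ ⨅ x : {x : H // ‖x‖ = 1}, A.reApplyInnerSelf (x : H) :=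
    le_ciInf fun x => rais_nonneg hA _
  have hle : (⨅ x : {x : H // ‖x‖ = 1}, A.reApplyInnerSelf (x : H)) ≠ 0 →
      ∃ m : ℝ, 0 < m ∧ algebraMap ℝ (H →L[ℂ] H) m ≤ A := fun h =>
    ⟨_, lt_of_le_of_ne hinf0 h.symm,
      algebraMap_le_of_rais hA fun x hx => ciInf_le hbdd ⟨x, hx⟩⟩
  tfae_have 1 → 2 := by
    intro h
    by_contra h2
    obtain ⟨m, hm, hmA⟩ := hle h2
    have : m ≤ ⨅ x : {x : H // ‖x‖ = 1}, fsDet₀ A (x : H) := by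
      refine le_ciInf fun x => le_ciInf fun ε => fsDet_lower hm (hsa ε) ?_ x.2
      refine hmA.trans ?_
      rw [← Algebra.algebraMap_eq_smul_one]
      exact le_add_of_nonneg_right (algebraMap_nonneg _ ε.2.le)
    linarith
  tfae_have 2 → 3 := by
    intro h
    have : ∀ n : ℕ, ∃ x : {x : H // ‖x‖ = 1}, A.reApplyInnerSelf (x : H) < 1 / ((n : ℝ) + 1) :=
      fun n => exists_lt_of_ciInf_lt (by rw [h]; positivity)
    choose x hx using this
    refine ⟨fun n => x n, fun n => (x n).2, ?_⟩
    exact squeeze_zero (fun n => rais_nonneg hA _) (fun n => (hx n).le)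
      tendsto_one_div_add_atTop_nhds_zero_nat
  tfae_have 3 → 4 := by
    rintro ⟨x, hx, ht⟩
    refine ⟨x, hx, ?_⟩
    have hs := CFC.sqrt_mul_sqrt_self A hA0
    have hp : (CFC.sqrt A).IsPositive := (nonneg_iff_isPositive _).1 (CFC.sqrt_nonneg A)
    set S := CFC.sqrt A
    have h1 : ∀ y, A y = S (S y) := fun y => by rw [← hs]; rfl
    have h2 : ∀ y, ‖S y‖ = Real.sqrt (A.reApplyInnerSelf y) := fun y => by
      rw [reApplyInnerSelf_apply, h1, hp.inner_left_eq_inner_right, inner_self_eq_norm_sq,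
        Real.sqrt_sq (norm_nonneg _)]
    have h3 : Filter.Tendsto (fun n => ‖S‖ * Real.sqrt (A.reApplyInnerSelf (x n)))
        Filter.atTop (nhds 0) := by
      have := ((Real.continuous_sqrt.tendsto 0).comp ht).const_mul ‖S‖
      simpa using this
    refine squeeze_zero (fun n => norm_nonneg _) (fun n => ?_) h3
    rw [h1, ← h2]
    exact S.le_opNorm _
  tfae_have 4 → 6 := by
    rintro ⟨x, hx, ht⟩ ⟨u, hu⟩
    have h1 : ∀ n, (1 : ℝ) ≤ ‖(↑u⁻¹ : H →L[ℂ] H)‖ * ‖A (x n)‖ := fun n => by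
      have h : (↑u⁻¹ : H →L[ℂ] H) (A (x n)) = x n := by
        rw [← hu]
        exact congrArg (fun T : H →L[ℂ] H => T (x n)) u.inv_mul
      calc (1 : ℝ) = ‖(↑u⁻¹ : H →L[ℂ] H) (A (x n))‖ := by rw [h, hx]
        _ ≤ _ := ContinuousLinearMap.le_opNorm _ _
    have h2 := ht.const_mul ‖(↑u⁻¹ : H →L[ℂ] H)‖
    have := ge_of_tendsto' h2 h1
    norm_num at this
  tfae_have 5 ↔ 6 := spectrum.zero_mem_iff ℝ
  tfae_have 6 → 2 := by
    intro h
    by_contra h2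
    obtain ⟨m, hm, hmA⟩ := hle h2
    refine h (isUnit_of_forall_le_norm_inner_map A (c := ⟨m, hm.le⟩) hm fun x => ?_)
    have := rais_mono hmA x
    rw [rais_algebraMap] at this
    refine le_trans ?_ (RCLike.re_le_norm _)
    rw [← reApplyInnerSelf_apply, mul_comm]
    exact this
  tfae_have 2 → 1 := by
    intro h
    refine le_antisymm (le_of_forall_pos_le_add fun δ hδ => ?_) (le_ciInf fun x => hf0 x)
    obtain ⟨x, hx⟩ : ∃ x : {x : H // ‖x‖ = 1}, A.reApplyInnerSelf (x : H) < δ / 2 :=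
      exists_lt_of_ciInf_lt (by rw [h]; positivity)
    have hB : BddBelow (Set.range fun x : {x : H // ‖x‖ = 1} => fsDet₀ A (x : H)) :=
      ⟨0, by rintro _ ⟨x, rfl⟩; exact hf0 _⟩
    refine (ciInf_le hB x).trans ((ciInf_le (hfb x) ⟨δ / 2, by positivity⟩).trans ?_)
    refine fsDet_upper (half_pos hδ) (hsa _) ?_ x.2 (by linarith) ?_
    · rw [← Algebra.algebraMap_eq_smul_one]
      exact le_add_of_nonneg_left hA0
    · rw [← Algebra.algebraMap_eq_smul_one, rais_add, rais_algebraMap, x.2]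
      linarith
  tfae_finish
end
end

section
/- Let H be a nontrivial complex Hilbert space and let A be a bounded positive operator on H. Then the infimum over unit vectors x of Δ_x(A) equals the infimum over unit vectors x of re⟪A x, x⟫, which equals inf σ(A); and the supremum over unit vectors x of Δ_x(A) equals the supremum over unit vectors x of re⟪A x, x⟫, which equals sup σ(A) = ‖A‖. -/
noncomputable section

open ContinuousLinearMap

variable {H : Type*} [NormedAddCommGroup H] [InnerProductSpace ℂ H] [CompleteSpace H]

lemma aux_nonneg_iff (T : H →L[ℂ] H) (hT : IsSelfAdjoint T) :
    0 ≤ T ↔ ∀ x : H, ‖x‖ = 1 → 0 ≤ T.reApplyInnerSelf x := by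
  rw [ContinuousLinearMap.nonneg_iff_isPositive]
  constructor
  · intro h x _
    exact h.2 x
  · intro h
    refine ⟨hT.isSymmetric, fun x => ?_⟩
    by_cases hx : x = 0
    · simp [hx, ContinuousLinearMap.reApplyInnerSelf]
    · have hn : ‖x‖ ≠ 0 := norm_ne_zero_iff.2 hx
      have h1 := h (((‖x‖⁻¹ : ℝ) : ℂ) • x) (by
        rw [norm_smul]; simp [hn])
      rw [ContinuousLinearMap.reApplyInnerSelf_smul] at h1
      have h2 : (0:ℝ) < ‖((‖x‖⁻¹ : ℝ) : ℂ)‖ ^ 2 := by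
        simp only [Complex.norm_real, norm_inv, norm_norm]; positivity
      exact nonneg_of_mul_nonneg_right h1 h2

lemma aux_re_sub (S T : H →L[ℂ] H) (x : H) :
    (S - T).reApplyInnerSelf x = S.reApplyInnerSelf x - T.reApplyInnerSelf x := by
  simp [ContinuousLinearMap.reApplyInnerSelf_apply, inner_sub_left]

lemma aux_re_algebraMap (r : ℝ) (x : H) (hx : ‖x‖ = 1) :
    (algebraMap ℝ (H →L[ℂ] H) r).reApplyInnerSelf x = r := by
  have : (algebraMap ℝ (H →L[ℂ] H) r) x = (r : ℂ) • x := by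
    rw [Algebra.algebraMap_eq_smul_one]; simp
  rw [ContinuousLinearMap.reApplyInnerSelf_apply, this, inner_smul_left,
    inner_self_eq_norm_sq_to_K, hx]
  simp

lemma aux_le_iff (S T : H →L[ℂ] H) (hS : IsSelfAdjoint S) (hT : IsSelfAdjoint T) :
    S ≤ T ↔ ∀ x : H, ‖x‖ = 1 → S.reApplyInnerSelf x ≤ T.reApplyInnerSelf x := by
  rw [← sub_nonneg, aux_nonneg_iff _ (hT.sub hS)]
  simp only [aux_re_sub, sub_nonneg]

lemma aux_lower (A : H →L[ℂ] H) (hA : IsSelfAdjoint A) (g : ℝ → ℝ)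
    (hg : ContinuousOn g (spectrum ℝ A)) (r : ℝ) :
    (∀ t ∈ spectrum ℝ A, r ≤ g t) ↔
      ∀ x : H, ‖x‖ = 1 → r ≤ (cfc g A).reApplyInnerSelf x := by
  rw [← algebraMap_le_cfc_iff g r A hg hA,
    aux_le_iff _ _ (IsSelfAdjoint.algebraMap _ (IsSelfAdjoint.all r)) (cfc_predicate g A)]
  refine forall_congr' fun x => forall_congr' fun hx => ?_
  rw [aux_re_algebraMap r x hx]

lemma aux_upper (A : H →L[ℂ] H) (hA : IsSelfAdjoint A) (g : ℝ → ℝ)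
    (hg : ContinuousOn g (spectrum ℝ A)) (r : ℝ) :
    (∀ t ∈ spectrum ℝ A, g t ≤ r) ↔
      ∀ x : H, ‖x‖ = 1 → (cfc g A).reApplyInnerSelf x ≤ r := by
  rw [← cfc_le_algebraMap_iff g r A hg hA,
    aux_le_iff _ _ (cfc_predicate g A) (IsSelfAdjoint.algebraMap _ (IsSelfAdjoint.all r))]
  refine forall_congr' fun x => forall_congr' fun hx => ?_
  rw [aux_re_algebraMap r x hx]

lemma aux_contlog (A : H →L[ℂ] H) (hs : ∀ t ∈ spectrum ℝ A, 0 ≤ t) (ε : ℝ) (hε : 0 < ε) :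
    ContinuousOn (fun t => Real.log (t + ε)) (spectrum ℝ A) := by
  refine ContinuousOn.log (by fun_prop) fun t ht => ?_
  have := hs t ht
  positivity

lemma aux_opLog (A : H →L[ℂ] H) (hA : IsSelfAdjoint A) (hs : ∀ t ∈ spectrum ℝ A, 0 ≤ t)
    (ε : ℝ) (hε : 0 < ε) :
    opLog (A + ε • 1) = cfc (fun t => Real.log (t + ε)) A := by
  have h1 : cfc (fun t : ℝ => t + ε) A = A + ε • 1 := by
    rw [cfc_add_const ε (fun t => t) A, cfc_id' ℝ A, Algebra.algebraMap_eq_smul_one]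
  rw [cfc_comp' Real.log (fun t => t + ε) A ?_, h1, opLog]
  rintro _ ⟨t, ht, rfl⟩
  have := hs t ht
  exact (Real.continuousAt_log (by positivity)).continuousWithinAt

lemma aux_sandwich (A : H →L[ℂ] H) (hA : IsSelfAdjoint A) (f g : ℝ → ℝ) (r : ℝ)
    (hf : ContinuousOn f (spectrum ℝ A)) (hg : ContinuousOn g (spectrum ℝ A))
    (h : ∀ t ∈ spectrum ℝ A, f t * r * f t ≤ f t * g t * f t) :
    cfc f A * algebraMap ℝ (H →L[ℂ] H) r * cfc f A ≤ cfc f A * cfc g A * cfc f A := by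
  have hr : ContinuousOn (fun _ : ℝ => r) (spectrum ℝ A) := continuousOn_const
  have e : ∀ k : ℝ → ℝ, ContinuousOn k (spectrum ℝ A) →
      cfc (fun t => f t * k t * f t) A = cfc f A * cfc k A * cfc f A := by
    intro k hk
    rw [cfc_mul (fun t => f t * k t) f A (hf.mul hk) hf, cfc_mul f k A hf hk]
  rw [← cfc_const r A hA, ← e _ hr, ← e _ hg]
  exact cfc_mono h ((hf.mul hr).mul hf) ((hf.mul hg).mul hf)

/-- A vector that works for all `ε` at once. -/
lemma aux_vector (A : H →L[ℂ] H) (hA : IsSelfAdjoint A) (hs : ∀ t ∈ spectrum ℝ A, 0 ≤ t)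
    (M : ℝ) (hM : M ∈ spectrum ℝ A) (c : ℝ) (hc : 0 < c) (hcM : c < M) :
    ∃ x : H, ‖x‖ = 1 ∧ ∀ ε : ℝ, 0 < ε → c ≤ fsDet (A + ε • 1) x := by
  set f : ℝ → ℝ := fun t => max (t - c) 0 with hf
  have hfc : Continuous f := by fun_prop
  set F := cfc f A with hF
  have hFs : IsSelfAdjoint F := cfc_predicate f A
  have hF0 : F ≠ 0 := by
    intro h0
    have h1 : f M ∈ spectrum ℝ F := by
      rw [hF, cfc_map_spectrum f A]
      exact ⟨M, hM, rfl⟩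
    have h2 : 0 ≤ F := h0.ge
    have h3 : ‖f M‖ ≤ ‖F‖ * ‖(1 : H →L[ℂ] H)‖ := spectrum.norm_le_norm_mul_of_mem h1
    rw [h0] at h3
    have : f M = 0 := by simpa using h3
    have h4 : M - c ≤ f M := le_max_left _ _
    linarith
  obtain ⟨y, hy⟩ : ∃ y, F y ≠ 0 := by
    by_contra! h
    exact hF0 (by ext y; simp [h y])
  have hn : ‖F y‖ ≠ 0 := norm_ne_zero_iff.2 hy
  refine ⟨((‖F y‖⁻¹ : ℝ) : ℂ) • F y, by rw [norm_smul]; simp [hn], fun ε hε => ?_⟩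
  have hlog := aux_contlog A hs ε hε
  rw [fsDet, aux_opLog A hA hs ε hε, ← Real.log_le_iff_le_exp hc,
    ContinuousLinearMap.reApplyInnerSelf_smul]
  set L := cfc (fun t => Real.log (t + ε)) A with hL
  have hle : F * (algebraMap ℝ (H →L[ℂ] H) (Real.log c)) * F ≤ F * L * F := by
    refine aux_sandwich A hA f _ _ hfc.continuousOn hlog fun t ht => ?_
    by_cases htc : t ≤ c
    · have : f t = 0 := max_eq_right (by linarith)
      simp [this]
    · have h1 : Real.log c ≤ Real.log (t + ε) := Real.log_le_log hc (by linarith)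
      have h2 : 0 ≤ f t := le_max_right _ _
      gcongr
  have h1 := ((ContinuousLinearMap.le_def _ _).1 hle).2 y
  have key : ∀ S : H →L[ℂ] H, (F * S * F).reApplyInnerSelf y = S.reApplyInnerSelf (F y) := by
    intro S
    simp only [ContinuousLinearMap.reApplyInnerSelf_apply, ContinuousLinearMap.mul_apply]
    congr 1
    exact hFs.isSymmetric (S (F y)) y
  have h2 : (F * algebraMap ℝ (H →L[ℂ] H) (Real.log c) * F).reApplyInnerSelf y
      ≤ (F * L * F).reApplyInnerSelf y := by
    rw [← sub_nonneg, ← aux_re_sub]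
    exact h1
  rw [key, key] at h2
  have h3 : ‖((‖F y‖⁻¹ : ℝ) : ℂ)‖ ^ 2 * (algebraMap ℝ (H →L[ℂ] H) (Real.log c)).reApplyInnerSelf
      (F y) = Real.log c := by
    rw [← ContinuousLinearMap.reApplyInnerSelf_smul]
    exact aux_re_algebraMap _ _ (by rw [norm_smul]; simp [hn])
  rw [← h3]
  gcongr

/-- For a positive operator `A` on a nontrivial Hilbert space, the infimum
(resp. supremum) over unit vectors of `Δ_x(A)` and of `re⟪A x, x⟫` both equal the lower
(resp. upper) endpoint of the spectrum of `A`, and `sup σ(A) = ‖A‖`. -/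
theorem fujiiSeo_spectral_endpoints [Nontrivial H] (A : H →L[ℂ] H) (hA : A.IsPositive) :
    (⨅ x : {x : H // ‖x‖ = 1}, fsDet₀ A (x : H)) = sInf (spectrum ℝ A) ∧
    (⨅ x : {x : H // ‖x‖ = 1}, A.reApplyInnerSelf (x : H)) = sInf (spectrum ℝ A) ∧
    (⨆ x : {x : H // ‖x‖ = 1}, fsDet₀ A (x : H)) = sSup (spectrum ℝ A) ∧
    (⨆ x : {x : H // ‖x‖ = 1}, A.reApplyInnerSelf (x : H)) = sSup (spectrum ℝ A) ∧
    sSup (spectrum ℝ A) = ‖A‖ := by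
  have hsa : IsSelfAdjoint A := hA.isSelfAdjoint
  have h0 : 0 ≤ A := (ContinuousLinearMap.nonneg_iff_isPositive A).2 hA
  have hs : ∀ t ∈ spectrum ℝ A, 0 ≤ t := fun t ht => spectrum_nonneg_of_nonneg h0 ht
  have hcpt : IsCompact (spectrum ℝ A) := spectrum.isCompact A
  have hnorm : ‖A‖ ∈ spectrum ℝ A := CStarAlgebra.norm_mem_spectrum_of_nonneg h0
  have hne : (spectrum ℝ A).Nonempty := ⟨_, hnorm⟩
  have hmem := hcpt.sInf_mem hne
  have hMem := hcpt.sSup_mem hne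
  have hm : ∀ t ∈ spectrum ℝ A, sInf (spectrum ℝ A) ≤ t := fun t ht => csInf_le hcpt.bddBelow ht
  have hM : ∀ t ∈ spectrum ℝ A, t ≤ sSup (spectrum ℝ A) := fun t ht => le_csSup hcpt.bddAbove ht
  set m := sInf (spectrum ℝ A)
  set M := sSup (spectrum ℝ A)
  have hm0 : 0 ≤ m := hs m hmem
  obtain ⟨x₀, hx₀⟩ := exists_norm_eq H (zero_le_one (α := ℝ))
  haveI : Nonempty {x : H // ‖x‖ = 1} := ⟨⟨x₀, hx₀⟩⟩
  haveI : Nonempty {ε : ℝ // 0 < ε} := ⟨⟨1, one_pos⟩⟩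
  have hid : cfc (fun t : ℝ => t) A = A := cfc_id' ℝ A
  have hidc : ContinuousOn (fun t : ℝ => t) (spectrum ℝ A) := by fun_prop
  have hbdd : ∀ x : H, BddBelow (Set.range fun ε : {ε : ℝ // 0 < ε} =>
      fsDet (A + (ε : ℝ) • 1) x) := fun x =>
    ⟨0, by rintro _ ⟨ε, rfl⟩; exact (Real.exp_pos _).le⟩
  have hlow : ∀ x : H, ‖x‖ = 1 → m ≤ fsDet₀ A x := by
    intro x hx
    refine le_ciInf fun ⟨ε, hε⟩ => ?_
    have h1 := (aux_lower A hsa _ (aux_contlog A hs ε hε) (Real.log (m + ε))).1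
      (fun t ht => Real.log_le_log (by linarith) (by linarith [hm t ht])) x hx
    rw [← aux_opLog A hsa hs ε hε, Real.log_le_iff_le_exp (by linarith)] at h1
    simp only [fsDet]
    linarith
  have hup : ∀ x : H, ‖x‖ = 1 → fsDet₀ A x ≤ M := by
    intro x hx
    refine le_of_forall_pos_le_add fun ε hε => ?_
    refine (ciInf_le (hbdd x) ⟨ε, hε⟩).trans ?_
    have h1 := (aux_upper A hsa _ (aux_contlog A hs ε hε) (Real.log (M + ε))).1
      (fun t ht => Real.log_le_log (by linarith [hs t ht]) (by linarith [hM t ht])) x hx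
    rw [← aux_opLog A hsa hs ε hε, Real.le_log_iff_exp_le (by linarith [hs M hMem])] at h1
    exact h1
  refine ⟨?_, ?_, ?_, ?_, ?_⟩
  · refine ciInf_eq_of_forall_ge_of_forall_gt_exists_lt (fun x => hlow x x.2) fun w hw => ?_
    have hε : 0 < (w - m) / 2 := by linarith
    by_contra! hcon
    have h1 := (aux_lower A hsa _ (aux_contlog A hs _ hε) (Real.log w)).2 (fun x hx => by
      rw [← aux_opLog A hsa hs _ hε, Real.log_le_iff_le_exp (by linarith)]
      exact (hcon ⟨x, hx⟩).trans (ciInf_le (hbdd x) ⟨_, hε⟩)) m hmem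
    have h2 := (Real.log_le_log_iff (by linarith) (by linarith)).1 h1
    linarith
  · have := fun r => aux_lower A hsa _ hidc r
    rw [hid] at this
    refine ciInf_eq_of_forall_ge_of_forall_gt_exists_lt
      (fun x => (this m).1 hm x x.2) fun w hw => ?_
    by_contra! hcon
    exact absurd ((this w).2 (fun x hx => hcon ⟨x, hx⟩) m hmem) (not_le.2 hw)
  · refine ciSup_eq_of_forall_le_of_forall_lt_exists_gt (fun x => hup x x.2) fun w hw => ?_
    by_cases hw0 : w < 0
    · exact ⟨⟨x₀, hx₀⟩, by linarith [hlow x₀ hx₀]⟩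
    · obtain ⟨x, hx, h⟩ := aux_vector A hsa hs M hMem ((w + M) / 2) (by linarith) (by linarith)
      refine ⟨⟨x, hx⟩, lt_of_lt_of_le (by linarith : w < (w + M) / 2) ?_⟩
      exact le_ciInf fun ε => h ε ε.2
  · have := fun r => aux_upper A hsa _ hidc r
    rw [hid] at this
    refine ciSup_eq_of_forall_le_of_forall_lt_exists_gt
      (fun x => (this M).1 hM x x.2) fun w hw => ?_
    by_contra! hcon
    exact absurd ((this w).2 (fun x hx => hcon ⟨x, hx⟩) M hMem) (not_le.2 hw)
  · refine le_antisymm ?_ (hM _ hnorm)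
    exact (le_abs_self _).trans (spectrum.norm_le_norm_of_mem hMem)
end
end

section
/- Let H be a complex Hilbert space, let A, B be strictly positive bounded operators on H, and suppose m·I ≤ B ≤ M·I for some 0 < m ≤ M. If for every p > 0 one has ((M^p + m^p)²/(4·M^p·m^p))·A^p ≥ B^p, then log A ≥ log B. -/
noncomputable section

open ContinuousLinearMap

variable {H : Type*} [NormedAddCommGroup H] [InnerProductSpace ℂ H] [CompleteSpace H]

/-- The operator power `A^p`, defined via the continuous functional calculus. -/
def opPow (A : H →L[ℂ] H) (p : ℝ) : H →L[ℂ] H := cfc (fun t : ℝ => t ^ p) A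

lemma aux_sp (A : H →L[ℂ] H) (hA : IsStrictlyPositive A) (p : ℝ) :
    IsStrictlyPositive (opPow A p) := by
  unfold opPow
  rw [← CFC.rpow_eq_cfc_real (a := A) (ha := hA.nonneg)]
  exact hA.rpow A p

lemma aux_log (A : H →L[ℂ] H) (hA : IsStrictlyPositive A) (p : ℝ) :
    CFC.log (opPow A p) = p • CFC.log A := by
  unfold opPow CFC.log
  have hpos : ∀ x ∈ spectrum ℝ A, 0 < x := fun x hx => hA.spectrum_pos hx
  have hc : ContinuousOn (fun t : ℝ => t ^ p) (spectrum ℝ A) := fun x hx =>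
    (Real.continuousAt_rpow_const x p (Or.inl (hpos x hx).ne')).continuousWithinAt
  have hl : ContinuousOn Real.log (spectrum ℝ A) := fun x hx =>
    (Real.continuousAt_log (hpos x hx).ne').continuousWithinAt
  have hl2 : ContinuousOn Real.log ((fun t : ℝ => t ^ p) '' spectrum ℝ A) := by
    rintro _ ⟨x, hx, rfl⟩
    exact (Real.continuousAt_log (Real.rpow_pos_of_pos (hpos x hx) p).ne').continuousWithinAt
  rw [← cfc_comp' Real.log (fun t : ℝ => t ^ p) A hl2 hc hA.isSelfAdjoint,
    ← cfc_smul p Real.log A hl]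
  exact cfc_congr fun x hx => by simp [Real.log_rpow (hpos x hx)]

lemma aux_K (m M : ℝ) (hm : 0 < m) (hM : 0 < M) :
    Filter.Tendsto (fun p : ℝ => p⁻¹ * Real.log ((M ^ p + m ^ p) ^ 2 / (4 * M ^ p * m ^ p)))
      (nhdsWithin 0 (Set.Ioi 0)) (nhds 0) := by
  have h1 : HasDerivAt (fun p : ℝ => 2 * Real.log (M ^ p + m ^ p) - Real.log 4
      - p * Real.log M - p * Real.log m) 0 0 := by
    have a1 := (hasDerivAt_id (0:ℝ)).const_rpow hM
    have a2 := (hasDerivAt_id (0:ℝ)).const_rpow hm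
    have a3 := (((((a1.add a2).log (by simp)).const_mul 2).sub_const (Real.log 4)).sub
      ((hasDerivAt_id (0:ℝ)).mul_const (Real.log M))).sub
      ((hasDerivAt_id (0:ℝ)).mul_const (Real.log m))
    refine HasDerivAt.congr_deriv (f := fun p : ℝ => 2 * Real.log (M ^ p + m ^ p) - Real.log 4
      - p * Real.log M - p * Real.log m) a3 ?_
    simp
    ring
  have h2 := h1.tendsto_slope_zero_right
  refine h2.congr fun p => ?_
  have u := Real.rpow_pos_of_pos hM p
  have v := Real.rpow_pos_of_pos hm p
  have h4 : Real.log 4 = 2 * Real.log (1 + 1) := by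
    rw [show (4:ℝ) = (1+1)^2 by norm_num, Real.log_pow]; norm_num
  rw [Real.log_div (by positivity) (by positivity), Real.log_mul (by positivity) (by positivity),
    Real.log_mul (by positivity) (by positivity), Real.log_pow, Real.log_rpow hM, Real.log_rpow hm]
  simp [h4]
  ring_nf
  simp

/-- The weak Kantorovich inequality for all `p > 0` implies the chaotic
order `log A ≥ log B`. -/
theorem weak_kantorovich_implies_chaotic_order
    (A B : H →L[ℂ] H) (m M : ℝ) (hm : 0 < m) (hmM : m ≤ M)
    (hA : A.IsPositive) (hAu : IsUnit A) (hB : B.IsPositive) (hBu : IsUnit B)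
    (hlow : (B - m • 1).IsPositive) (hupp : (M • 1 - B).IsPositive)
    (hkant : ∀ p : ℝ, 0 < p →
      ((((M ^ p + m ^ p) ^ 2 / (4 * M ^ p * m ^ p)) • opPow A p) - opPow B p).IsPositive) :
    (opLog A - opLog B).IsPositive := by
  have hA' : IsStrictlyPositive A := ⟨(nonneg_iff_isPositive A).2 hA, hAu⟩
  have hB' : IsStrictlyPositive B := ⟨(nonneg_iff_isPositive B).2 hB, hBu⟩
  have hM : 0 < M := hm.trans_le hmM
  change CFC.log B ≤ CFC.log A
  have key : ∀ p : ℝ, 0 < p → CFC.log B ≤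
      algebraMap ℝ (H →L[ℂ] H)
        (p⁻¹ * Real.log ((M ^ p + m ^ p) ^ 2 / (4 * M ^ p * m ^ p))) + CFC.log A := by
    intro p hp
    have u := Real.rpow_pos_of_pos hM p
    have v := Real.rpow_pos_of_pos hm p
    have h1 : opPow B p ≤ ((M ^ p + m ^ p) ^ 2 / (4 * M ^ p * m ^ p)) • opPow A p := hkant p hp
    have h2 := CFC.log_le_log h1 (aux_sp B hB' p)
    have hspA := aux_sp A hA' p
    rw [CFC.log_smul (opPow A p) (fun x hx => (hspA.spectrum_pos hx).ne') (by positivity)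
      hspA.isSelfAdjoint, aux_log A hA', aux_log B hB'] at h2
    have h3 := smul_le_smul_of_nonneg_left h2 (inv_pos.2 hp).le
    rw [smul_add, smul_smul, smul_smul, inv_mul_cancel₀ hp.ne', one_smul, one_smul] at h3
    rwa [Algebra.algebraMap_eq_smul_one, mul_smul, ← Algebra.algebraMap_eq_smul_one]
  have hT := (((algebraMapCLM ℝ (H →L[ℂ] H)).continuous.tendsto 0).comp
    (aux_K m M hm hM)).add_const (CFC.log A)
  simp only [map_zero, zero_add] at hT
  refine ge_of_tendsto hT ?_
  filter_upwards [self_mem_nhdsWithin] with p hp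
  exact key p hp
end
end

section
/- Let H be a complex Hilbert space, let A, B be strictly positive bounded operators on H, and suppose m·I ≤ B ≤ M·I for some 0 < m ≤ M; put h := M/m. If for every p > 0 one has S(h^p)·A^p ≥ B^p, where S(h) := (h−1)·h^{1/(h−1)}/(e·log h) for h > 1 and S(1) := 1 is Specht's ratio, then log A ≥ log B. -/
noncomputable section

open ContinuousLinearMap

variable {H : Type*} [NormedAddCommGroup H] [InnerProductSpace ℂ H] [CompleteSpace H]

lemma specht_le_aux {t : ℝ} (ht : 0 ≤ t) (ht1 : t ≤ 1) :
    spechtRatio (Real.exp t) ≤ 1 + 2 * t ^ 2 := by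
  rcases ht.eq_or_lt with rfl | ht0
  · simp [spechtRatio]
  have hne : Real.exp t ≠ 1 := by
    have := Real.add_one_lt_exp ht0.ne'
    intro h; linarith
  have hlt := Real.add_one_lt_exp ht0.ne'
  rw [spechtRatio, if_neg hne, Real.log_exp, ← Real.exp_mul]
  set y := (Real.exp t - 1) / t with hy
  have hy1 : 1 ≤ y := by rw [hy, le_div_iff₀ ht0]; linarith
  have hyt : y - 1 ≤ t := by
    have h := Real.abs_exp_sub_one_sub_id_le (x := t) (by rw [abs_of_pos ht0]; exact ht1)
    have h2 := le_of_abs_le h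
    have : y ≤ 1 + t := by rw [hy, div_le_iff₀ ht0]; nlinarith
    linarith
  have hy0 : 0 < y := by linarith
  have e1 : (Real.exp t - 1) * Real.exp (t * (1 / (Real.exp t - 1))) / (Real.exp 1 * t)
      = Real.exp (Real.log y + y⁻¹ - 1) := by
    rw [Real.exp_sub, Real.exp_add, Real.exp_log hy0]
    have : y⁻¹ = t * (1 / (Real.exp t - 1)) := by rw [hy, inv_div]; ring
    rw [this]
    rw [hy]; field_simp
  rw [e1]
  have hlog := Real.log_le_sub_one_of_pos hy0
  have hinv : y⁻¹ ≤ 1 - (y - 1) + (y - 1) ^ 2 := by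
    rw [inv_le_iff_one_le_mul₀ hy0]
    nlinarith [pow_nonneg (sub_nonneg.2 hy1) 3]
  have hsq : (y - 1) ^ 2 ≤ t ^ 2 := by
    apply pow_le_pow_left₀ (by linarith) hyt
  calc Real.exp (Real.log y + y⁻¹ - 1) ≤ Real.exp (t ^ 2) := by
        apply Real.exp_le_exp.2; linarith
    _ ≤ 1 + 2 * t ^ 2 := by
        have ht2 : t ^ 2 ≤ 1 := by nlinarith
        have h := Real.abs_exp_sub_one_sub_id_le (x := t ^ 2)
          (by rw [abs_of_nonneg (sq_nonneg t)]; exact ht2)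
        have h2 := le_of_abs_le h
        nlinarith [sq_nonneg t]

lemma cfc_aux {A : H →L[ℂ] H} (hA : IsStrictlyPositive A) {p : ℝ} :
    cfc (fun x : ℝ => p⁻¹ * (x ^ p - 1)) A = p⁻¹ • (opPow A p - 1) := by
  have h0 : ∀ x ∈ spectrum ℝ A, x ≠ 0 := fun x hx => by grind
  have hc : ContinuousOn (fun x : ℝ => x ^ p) (spectrum ℝ A) :=
    fun x hx => (Real.continuousAt_rpow_const x p (Or.inl (h0 x hx))).continuousWithinAt
  have hsa : IsSelfAdjoint A := hA.nonneg.isSelfAdjoint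
  simp only [← smul_eq_mul]
  rw [cfc_smul p⁻¹ (fun x : ℝ => x ^ p - 1) A (hc.sub continuousOn_const), cfc_sub _ _ _ hc continuousOn_const,
    cfc_const_one .., opPow]

/-- The strong Kantorovich (Specht) inequality for all `p > 0` implies the
chaotic order `log A ≥ log B`. -/
theorem strong_kantorovich_implies_chaotic_order
    (A B : H →L[ℂ] H) (m M : ℝ) (hm : 0 < m) (hmM : m ≤ M)
    (hA : A.IsPositive) (hAu : IsUnit A) (hB : B.IsPositive) (hBu : IsUnit B)
    (hlow : (B - m • 1).IsPositive) (hupp : (M • 1 - B).IsPositive)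
    (hkant : ∀ p : ℝ, 0 < p →
      ((spechtRatio ((M / m) ^ p) • opPow A p) - opPow B p).IsPositive) :
    (opLog A - opLog B).IsPositive := by
  have key : ∀ T : H →L[ℂ] H, T.IsPositive → IsUnit T → IsStrictlyPositive T := fun T h1 h2 =>
    h2.isStrictlyPositive ((ContinuousLinearMap.nonneg_iff_isPositive T).2 h1)
  have hA' := key A hA hAu
  have hB' := key B hB hBu
  have hM : 0 < M := hm.trans_le hmM
  have hh : 1 ≤ M / m := (one_le_div hm).2 hmM
  set L := Real.log (M / m) with hL
  have hL0 : 0 ≤ L := Real.log_nonneg hh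
  have tA := CFC.tendsto_cfc_rpow_sub_one_log hA'
  have tB := CFC.tendsto_cfc_rpow_sub_one_log hB'
  have tp : Filter.Tendsto (fun p : ℝ => p) (nhdsWithin 0 (Set.Ioi 0)) (nhds 0) :=
    tendsto_nhdsWithin_of_tendsto_nhds Filter.tendsto_id
  have tc : Filter.Tendsto (fun p : ℝ => 1 + 2 * (p * L) ^ 2) (nhdsWithin 0 (Set.Ioi 0))
      (nhds 1) := by
    have := (((tp.mul_const L).pow 2).const_mul 2).const_add 1
    simpa using this
  have td : Filter.Tendsto (fun p : ℝ => 2 * p * L ^ 2) (nhdsWithin 0 (Set.Ioi 0))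
      (nhds 0) := by
    have := (tp.const_mul 2).mul_const (L ^ 2)
    simpa using this
  have tt := ((tc.smul tA).sub tB).add (td.smul_const (1 : H →L[ℂ] H))
  rw [one_smul, zero_smul, add_zero] at tt
  have hev : ∀ᶠ p : ℝ in nhdsWithin 0 (Set.Ioi 0), 0 < p ∧ p * L < 1 := by
    refine Filter.Eventually.and self_mem_nhdsWithin ?_
    have := tp.mul_const L
    rw [zero_mul] at this
    exact this.eventually_lt_const one_pos
  have : 0 ≤ opLog A - opLog B := by
    refine ge_of_tendsto tt ?_
    filter_upwards [hev] with p ⟨hp, hpL⟩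
    have h1 := (ContinuousLinearMap.nonneg_iff_isPositive _).2 (hkant p hp)
    have hexp : (M / m) ^ p = Real.exp (p * L) := by
      rw [Real.rpow_def_of_pos (by positivity), mul_comm]
    rw [hexp] at h1
    have h2 := specht_le_aux (mul_nonneg hp.le hL0) hpL.le
    have hP : 0 ≤ opPow A p := by
      apply cfc_nonneg
      intro x hx
      exact Real.rpow_nonneg (spectrum_nonneg_of_nonneg hA'.nonneg hx) p
    have h3 : 0 ≤ (1 + 2 * (p * L) ^ 2) • opPow A p - opPow B p :=
      h1.trans (sub_le_sub_right (smul_le_smul_of_nonneg_right h2 hP) _)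
    have h4 := smul_nonneg (inv_nonneg.2 hp.le) h3
    rw [cfc_aux hA', cfc_aux hB']
    refine h4.trans_eq ?_
    have hp0 := hp.ne'
    match_scalars <;> field_simp <;> ring
  exact (ContinuousLinearMap.nonneg_iff_isPositive _).1 this
end
end

section
/- Let H be a complex Hilbert space, let A, B be strictly positive bounded operators on H, and suppose m·I ≤ B ≤ M·I for some 0 < m ≤ M; put h := M/m. For p > 0 set C_p(m,M) := ((M^p − m^p)/(log M^p − log m^p))·log S(h^p) if m < M and C_p(m,M) := 0 if m = M, where S(h) := (h−1)·h^{1/(h−1)}/(e·log h) for h > 1 and S(1) := 1. If for every p > 0 one has A^p + C_p(m,M)·I ≥ B^p, then log A ≥ log B. -/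
noncomputable section

open ContinuousLinearMap

variable {H : Type*} [NormedAddCommGroup H] [InnerProductSpace ℂ H] [CompleteSpace H]

/-- The additive constant
`C_p(m,M) = ((M^p - m^p)/(log M^p - log m^p)) * log S((M/m)^p)` for `m < M`,
and `C_p(m,m) = 0`. -/
def fsAddConstP (m M p : ℝ) : ℝ :=
  if m = M then 0
  else ((M ^ p - m ^ p) / (Real.log (M ^ p) - Real.log (m ^ p))) *
    Real.log (spechtRatio ((M / m) ^ p))

open Filter Topology in
lemma aux_log_bound (u : ℝ) (hu : 0 < u) (hu1 : u ≤ 1) :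
    Real.log (spechtRatio (Real.exp u)) ≤ u ^ 2 := by
  have h1 : Real.exp u ≠ 1 := by
    have := Real.add_one_lt_exp hu.ne'
    intro h; linarith
  have he : u + 1 < Real.exp u := Real.add_one_lt_exp hu.ne'
  have hp : 0 < Real.exp u - 1 := by linarith
  have hb : Real.exp u - 1 - u ≤ u ^ 2 := by
    have := Real.abs_exp_sub_one_sub_id_le (x := u) (by rw [abs_of_pos hu]; exact hu1)
    exact (le_abs_self _).trans this
  obtain ⟨w, hw⟩ : ∃ w, w = (Real.exp u - 1) / u := ⟨_, rfl⟩
  have hwe : Real.exp u - 1 = w * u := by rw [hw]; field_simp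
  have hw1 : 1 < w := by rw [hw, lt_div_iff₀ hu]; linarith
  have hw2 : w - 1 ≤ u := by
    have : w ≤ 1 + u := by rw [hw, div_le_iff₀ hu]; nlinarith
    linarith
  have hw0 : 0 < w := by linarith
  have key : spechtRatio (Real.exp u) = w * Real.exp (1 / w - 1) := by
    rw [spechtRatio, if_neg h1, Real.log_exp, ← Real.exp_mul, hwe, Real.exp_sub]
    have : u * (1 / (w * u)) = 1 / w := by field_simp
    rw [this]
    field_simp
  rw [key, Real.log_mul hw0.ne' (Real.exp_pos _).ne', Real.log_exp]
  have hl := Real.log_le_sub_one_of_pos hw0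
  have h3 : 1 / w - 1 ≤ - (w - 1) + (w - 1) ^ 2 := by
    rw [sub_le_iff_le_add, div_le_iff₀ hw0]
    nlinarith [mul_nonneg (sub_nonneg.2 hw1.le) (mul_nonneg (sub_nonneg.2 hw1.le) (sub_nonneg.2 hw1.le))]
  nlinarith

lemma aux_const_bound (m M p : ℝ) (hm : 0 < m) (hmM : m ≤ M) (hp : 0 < p)
    (hp1 : p * (Real.log M - Real.log m) ≤ 1) :
    p⁻¹ * fsAddConstP m M p ≤
      (p⁻¹ * (M ^ p - 1) - p⁻¹ * (m ^ p - 1)) * (p * (Real.log M - Real.log m)) := by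
  rcases hmM.eq_or_lt with rfl | hlt
  · simp [fsAddConstP]
  have hM : 0 < M := hm.trans hlt
  have hL : 0 < Real.log M - Real.log m := sub_pos.2 (Real.log_lt_log hm hlt)
  have hu : 0 < p * (Real.log M - Real.log m) := mul_pos hp hL
  have hh : (M / m) ^ p = Real.exp (p * (Real.log M - Real.log m)) := by
    rw [Real.rpow_def_of_pos (div_pos hM hm), Real.log_div hM.ne' hm.ne', mul_comm]
  have hb := aux_log_bound _ hu hp1
  have hMm : 0 < M ^ p - m ^ p := sub_pos.2 (Real.rpow_lt_rpow hm.le hlt hp)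
  rw [fsAddConstP, if_neg hlt.ne, hh, Real.log_rpow hM, Real.log_rpow hm, ← mul_sub]
  calc _ ≤ p⁻¹ * ((M ^ p - m ^ p) / (p * (Real.log M - Real.log m)) *
          (p * (Real.log M - Real.log m)) ^ 2) := by gcongr
    _ = _ := by field_simp; ring

lemma aux_cfc (A : H →L[ℂ] H) (hA : IsStrictlyPositive A) (p : ℝ) :
    cfc (fun x : ℝ => p⁻¹ * (x ^ p - 1)) A = p⁻¹ • (opPow A p - 1) := by
  simp only [← smul_eq_mul, opPow]
  rw [cfc_smul _ (hf := by fun_prop (disch := grind)),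
    cfc_sub _ _ (hf := by fun_prop (disch := grind)),
    cfc_const_one ..]

/-- The additive Kantorovich inequality for all `p > 0` implies the chaotic
order `log A ≥ log B`. -/
theorem additive_kantorovich_implies_chaotic_order
    (A B : H →L[ℂ] H) (m M : ℝ) (hm : 0 < m) (hmM : m ≤ M)
    (hA : A.IsPositive) (hAu : IsUnit A) (hB : B.IsPositive) (hBu : IsUnit B)
    (hlow : (B - m • 1).IsPositive) (hupp : (M • 1 - B).IsPositive)
    (hkant : ∀ p : ℝ, 0 < p →
      ((opPow A p + fsAddConstP m M p • 1) - opPow B p).IsPositive) :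
    (opLog A - opLog B).IsPositive := by
  have hA' : IsStrictlyPositive A :=
    IsStrictlyPositive.iff_of_unital.2 ⟨(nonneg_iff_isPositive A).2 hA, hAu⟩
  have hB' : IsStrictlyPositive B :=
    IsStrictlyPositive.iff_of_unital.2 ⟨(nonneg_iff_isPositive B).2 hB, hBu⟩
  rw [← nonneg_iff_isPositive]
  let q : ℝ → ℝ := fun p =>
    (p⁻¹ * (M ^ p - 1) - p⁻¹ * (m ^ p - 1)) * (p * (Real.log M - Real.log m))
  have hid : Filter.Tendsto (fun p : ℝ => p * (Real.log M - Real.log m))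
      (nhdsWithin 0 (Set.Ioi 0)) (nhds 0) := by
    have h : Continuous fun p : ℝ => p * (Real.log M - Real.log m) := by fun_prop
    have h2 := h.tendsto 0
    rw [zero_mul] at h2
    exact h2.mono_left nhdsWithin_le_nhds
  have hq : Filter.Tendsto q (nhdsWithin 0 (Set.Ioi 0)) (nhds 0) := by
    have := ((tendsto_rpow_sub_one_log (hm.trans_le hmM)).sub (tendsto_rpow_sub_one_log hm)).mul hid
    rw [mul_zero] at this
    exact this
  have hlim := ((CFC.tendsto_cfc_rpow_sub_one_log hA').add
    (hq.smul_const (1 : H →L[ℂ] H))).sub (CFC.tendsto_cfc_rpow_sub_one_log hB')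
  rw [zero_smul, add_zero] at hlim
  refine ge_of_tendsto hlim ?_
  filter_upwards [self_mem_nhdsWithin, hid.eventually (eventually_le_nhds zero_lt_one)]
    with p hp hp1
  have hp : 0 < p := hp
  rw [aux_cfc A hA', aux_cfc B hB']
  have h1 := (nonneg_iff_isPositive _).2 (hkant p hp)
  have h2 : 0 ≤ p⁻¹ • ((opPow A p + fsAddConstP m M p • 1) - opPow B p) :=
    smul_nonneg (inv_pos.2 hp).le h1
  have h3 : (0 : H →L[ℂ] H) ≤ (q p - p⁻¹ * fsAddConstP m M p) • 1 :=
    smul_nonneg (sub_nonneg.2 (aux_const_bound m M p hm hmM hp hp1)) zero_le_one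
  refine (add_nonneg h2 h3).trans_eq ?_
  module
end
end

section
/- Let H be a complex Hilbert space and let A, B be strictly positive bounded operators on H with log A ≥ log B and m·I ≤ B ≤ M·I for some 0 < m < M. Fix p > 0 and put h := M/m, S := S(h^p) where S(h) := (h−1)·h^{1/(h−1)}/(e·log h) for h > 1, and C_add(m,M,p) := ((M^p − m^p)/(log M^p − log m^p))·log S. Then for every c ∈ [1, S] one has c·A^p + ((S − c)/(S − 1))·C_add(m,M,p)·I ≥ B^p. -/
noncomputable section

open ContinuousLinearMap

variable {H : Type*} [NormedAddCommGroup H] [InnerProductSpace ℂ H] [CompleteSpace H]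

lemma aux_young (α k S c s β : ℝ) (hα : 0 < α) (hk : 0 < k)
    (hβ : β = α * (Real.log S - Real.log α + 1)) :
    α * s + β ≤ k * Real.exp s + α * (Real.log S - Real.log k) := by
  have h1 := Real.add_one_le_exp (s + Real.log k - Real.log α)
  rw [Real.exp_sub, Real.exp_add, Real.exp_log hk, Real.exp_log hα, le_div_iff₀ hα] at h1
  rw [hβ]
  linarith

lemma aux_mix (α S c s β : ℝ) (hα : 0 < α) (hc : 1 ≤ c) (hcS : c ≤ S)
    (hβ : β = α * (Real.log S - Real.log α + 1)) :
    α * s + β ≤ c * Real.exp s + (S - c) / (S - 1) * (α * Real.log S) := by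
  have h1 := aux_young α 1 S c s β hα one_pos hβ
  have h2 := aux_young α S S c s β hα (by linarith) hβ
  simp only [Real.log_one, sub_zero, one_mul, sub_self, mul_zero, add_zero] at h1 h2
  rcases eq_or_lt_of_le (hc.trans hcS) with h | h
  · have : c = S := by linarith
    subst this
    simpa using h2
  · have hS : 0 < S - 1 := by linarith
    have e : c * Real.exp s = (S - c) / (S - 1) * Real.exp s
        + (c - 1) / (S - 1) * (S * Real.exp s) := by
      field_simp; ring
    have e2 : α * s + β = (S - c) / (S - 1) * (α * s + β)
        + (c - 1) / (S - 1) * (α * s + β) := by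
      field_simp; ring
    have a1 : 0 ≤ (S - c) / (S - 1) := div_nonneg (by linarith) hS.le
    have a2 : 0 ≤ (c - 1) / (S - 1) := div_nonneg (by linarith) hS.le
    have := mul_le_mul_of_nonneg_left h1 a1
    have := mul_le_mul_of_nonneg_left h2 a2
    rw [e, e2]
    linarith

lemma aux_specht (a b : ℝ) (hab : a < b) :
    Real.exp a - (Real.exp b - Real.exp a) / (b - a) * a =
      (Real.exp b - Real.exp a) / (b - a) * (Real.log (spechtRatio (Real.exp (b - a)))
        - Real.log ((Real.exp b - Real.exp a) / (b - a)) + 1) := by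
  have hd : 0 < b - a := by linarith
  have hh : 0 < Real.exp (b - a) - 1 := by
    have := Real.one_lt_exp_iff.2 hd
    linarith
  have hb : Real.exp b - Real.exp a = Real.exp a * (Real.exp (b - a) - 1) := by
    rw [mul_sub, ← Real.exp_add]; ring_nf
  have hS : Real.log (spechtRatio (Real.exp (b - a))) =
      Real.log (Real.exp (b - a) - 1) + (b - a) / (Real.exp (b - a) - 1)
        - 1 - Real.log (b - a) := by
    rw [spechtRatio, if_neg (by linarith), Real.log_exp, Real.log_div (by positivity)
      (by positivity), Real.log_mul hh.ne' (by positivity), Real.log_mul (by positivity) hd.ne',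
      Real.log_rpow (Real.exp_pos _), Real.log_exp, Real.log_exp]
    ring
  rw [hS, hb, Real.log_div (by positivity) hd.ne', Real.log_mul (by positivity) hh.ne',
    Real.log_exp]
  generalize Real.exp (b - a) - 1 = u at *
  field_simp
  ring

lemma aux_chord (a b s : ℝ) (hab : a < b) (h1 : a ≤ s) (h2 : s ≤ b) :
    Real.exp s ≤ (Real.exp b - Real.exp a) / (b - a) * s +
      (Real.exp a - (Real.exp b - Real.exp a) / (b - a) * a) := by
  have hd : 0 < b - a := by linarith
  have := convexOn_exp.2 (Set.mem_univ a) (Set.mem_univ b)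
    (div_nonneg (sub_nonneg.2 h2) hd.le) (div_nonneg (sub_nonneg.2 h1) hd.le)
    (by field_simp; ring)
  simp only [smul_eq_mul] at this
  have e : (b - s) / (b - a) * a + (s - a) / (b - a) * b = s := by field_simp; ring
  rw [e] at this
  refine this.trans (le_of_eq ?_)
  field_simp
  ring

lemma aux_cfc_s7 (A : H →L[ℂ] H) (hA : IsSelfAdjoint A) (h0 : ∀ t ∈ spectrum ℝ A, 0 < t)
    (f : ℝ → ℝ) (hf : ContinuousOn f (spectrum ℝ A)) (x y : ℝ) :
    cfc (fun t => x * f t + y) A = x • cfc f A + y • 1 := by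
  rw [cfc_add (R := ℝ) (a := A) (fun t => x * f t) (fun _ => y) (by fun_prop) (by fun_prop),
    cfc_const_mul x f A hf, cfc_const y A hA, Algebra.algebraMap_eq_smul_one]

/-- Mixed additive–multiplicative Kantorovich–Specht bound: if
`log A ≥ log B` and `m • I ≤ B ≤ M • I` with `0 < m < M`, then for `p > 0` and every
`c ∈ [1, S((M/m)^p)]` one has `c • A^p + ((S - c)/(S - 1)) * C_add(m,M,p) • I ≥ B^p`. -/
theorem mixed_kantorovich_specht_bound
    (A B : H →L[ℂ] H) (m M p : ℝ) (hm : 0 < m) (hmM : m < M) (hp : 0 < p)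
    (hA : A.IsPositive) (hAu : IsUnit A) (hB : B.IsPositive) (hBu : IsUnit B)
    (hlog : (opLog A - opLog B).IsPositive)
    (hlow : (B - m • 1).IsPositive) (hupp : (M • 1 - B).IsPositive) :
    ∀ c : ℝ, 1 ≤ c → c ≤ spechtRatio ((M / m) ^ p) →
      (((c • opPow A p) +
        (((spechtRatio ((M / m) ^ p) - c) / (spechtRatio ((M / m) ^ p) - 1)) *
          fsAddConstP m M p) • 1) - opPow B p).IsPositive := by
  intro c hc hcS
  have hM : 0 < M := hm.trans hmM
  have hAs : IsSelfAdjoint A := hA.isSelfAdjoint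
  have hBs : IsSelfAdjoint B := hB.isSelfAdjoint
  have spA : ∀ t ∈ spectrum ℝ A, 0 < t := by
    intro t ht
    have h0 : (0 : H →L[ℂ] H) ≤ A := (ContinuousLinearMap.nonneg_iff_isPositive A).2 hA
    refine lt_of_le_of_ne (spectrum_nonneg_of_nonneg h0 ht) ?_
    rintro rfl
    exact (spectrum.zero_notMem_iff ℝ).2 hAu ht
  have spB1 : ∀ t ∈ spectrum ℝ B, m ≤ t := by
    rw [← algebraMap_le_iff_le_spectrum (R := ℝ) (a := B) hBs, Algebra.algebraMap_eq_smul_one]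
    exact hlow
  have spB2 : ∀ t ∈ spectrum ℝ B, t ≤ M := by
    rw [← le_algebraMap_iff_spectrum_le (R := ℝ) (a := B) hBs, Algebra.algebraMap_eq_smul_one]
    exact hupp
  have spB : ∀ t ∈ spectrum ℝ B, 0 < t := fun t ht => hm.trans_le (spB1 t ht)
  have clog : ∀ s : Set ℝ, (∀ t ∈ s, 0 < t) → ContinuousOn Real.log s := fun s hs =>
    Real.continuousOn_log.mono fun t ht => (hs t ht).ne'
  have cpow : ∀ s : Set ℝ, (∀ t ∈ s, 0 < t) → ContinuousOn (fun t : ℝ => t ^ p) s :=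
    fun s hs t ht => (Real.continuousAt_rpow_const t p (Or.inl (hs t ht).ne')).continuousWithinAt
  have epow : ∀ t : ℝ, 0 < t → t ^ p = Real.exp (p * Real.log t) := fun t ht => by
    rw [Real.rpow_def_of_pos ht, mul_comm]
  have hab : p * Real.log m < p * Real.log M :=
    mul_lt_mul_of_pos_left (Real.log_lt_log hm hmM) hp
  have hr : (M / m) ^ p = Real.exp (p * Real.log M - p * Real.log m) := by
    rw [epow _ (by positivity), Real.log_div hM.ne' hm.ne', mul_sub]
  have hC : fsAddConstP m M p = (Real.exp (p * Real.log M) - Real.exp (p * Real.log m)) /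
      (p * Real.log M - p * Real.log m) * Real.log (spechtRatio ((M / m) ^ p)) := by
    rw [fsAddConstP, if_neg hmM.ne, epow M hM, epow m hm, Real.log_exp, Real.log_exp]
  have hβ := aux_specht _ _ hab
  rw [← hr] at hβ
  rw [hC]
  have hα : 0 < (Real.exp (p * Real.log M) - Real.exp (p * Real.log m)) /
      (p * Real.log M - p * Real.log m) :=
    div_pos (sub_pos.2 (Real.exp_lt_exp.2 hab)) (sub_pos.2 hab)
  have hch := fun s => aux_chord (p * Real.log m) (p * Real.log M) s hab
  generalize spechtRatio ((M / m) ^ p) = S at *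
  generalize Real.exp (p * Real.log m) - (Real.exp (p * Real.log M) - Real.exp (p * Real.log m)) /
      (p * Real.log M - p * Real.log m) * (p * Real.log m) = β at *
  generalize (Real.exp (p * Real.log M) - Real.exp (p * Real.log m)) /
      (p * Real.log M - p * Real.log m) = α at *
  have cA := clog _ spA
  have cB := clog _ spB
  have pA := cpow _ spA
  have pB := cpow _ spB
  have s1 : opPow B p ≤ (α * p) • opLog B + β • 1 := by
    rw [opPow, opLog, ← aux_cfc_s7 B hBs spB _ cB]
    refine cfc_mono (fun t ht => ?_) pB (by fun_prop)
    rw [epow t (spB t ht), mul_assoc]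
    exact hch _ (mul_le_mul_of_nonneg_left (Real.log_le_log hm (spB1 t ht)) hp.le)
      (mul_le_mul_of_nonneg_left (Real.log_le_log (spB t ht) (spB2 t ht)) hp.le)
  have s2 : (α * p) • opLog B + β • 1 ≤ (α * p) • opLog A + β • (1 : H →L[ℂ] H) := by
    have h : opLog B ≤ opLog A := hlog
    have := smul_le_smul_of_nonneg_left h (mul_pos hα hp).le
    gcongr
  have s3 : (α * p) • opLog A + β • 1 ≤
      c • opPow A p + ((S - c) / (S - 1) * (α * Real.log S)) • (1 : H →L[ℂ] H) := by
    rw [opPow, opLog, ← aux_cfc_s7 A hAs spA _ cA, ← aux_cfc_s7 A hAs spA _ pA]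
    refine cfc_mono (fun t ht => ?_) (by fun_prop) (by fun_prop)
    rw [epow t (spA t ht), mul_assoc]
    exact aux_mix α S c _ β hα hc hcS hβ
  exact (s1.trans s2).trans s3
end
end

section
/- Let H be a complex Hilbert space, Ω ⊆ H open, and let u : H → ℝ be plurisubharmonic on Ω with Levi form L : H → (H →L[ℂ] H) on Ω such that the map a ↦ L a is norm-continuous on Ω. If u is maximal in Ω, then for every a ∈ Ω the Fujii–Seo determinant density FSD(u)(a) := ⨅_{‖x‖=1} Δ_x(L a) equals 0. -/
noncomputable section

open ContinuousLinearMap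

variable {H : Type*} [NormedAddCommGroup H] [InnerProductSpace ℂ H] [CompleteSpace H]

/-- `u` is plurisubharmonic on the open set `Ω`: it is upper semicontinuous on `Ω` and
satisfies the sub-mean-value inequality on every closed complex disc contained in `Ω`. -/
def IsPsh (Ω : Set H) (u : H → ℝ) : Prop :=
  UpperSemicontinuousOn u Ω ∧
  ∀ z ∈ Ω, ∀ h : H, (∀ l : ℂ, ‖l‖ ≤ 1 → z + l • h ∈ Ω) →
    u z ≤ (2 * Real.pi)⁻¹ *
      ∫ θ in (0:ℝ)..(2 * Real.pi), u (z + Complex.exp (θ * Complex.I) • h)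

/-- `L` is a Levi form for `u` on `Ω`: each `L a` is a positive operator, and along every
complex line through a point of `Ω` the function `u` is `C²` with planar Laplacian equal to
`4 * re⟪L(·) h, h⟫`. -/
def IsLeviForm (Ω : Set H) (u : H → ℝ) (L : H → (H →L[ℂ] H)) : Prop :=
  (∀ a ∈ Ω, (L a).IsPositive) ∧
  ∀ a ∈ Ω, ∀ h : H,
    ContDiffOn ℝ 2 (fun p : ℝ × ℝ => u (a + ((p.1 : ℂ) + (p.2 : ℂ) * Complex.I) • h))
      {p : ℝ × ℝ | a + ((p.1 : ℂ) + (p.2 : ℂ) * Complex.I) • h ∈ Ω} ∧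
    ∀ s r : ℝ, a + ((s : ℂ) + (r : ℂ) * Complex.I) • h ∈ Ω →
      deriv (deriv (fun s' : ℝ => u (a + ((s' : ℂ) + (r : ℂ) * Complex.I) • h))) s +
      deriv (deriv (fun r' : ℝ => u (a + ((s : ℂ) + (r' : ℂ) * Complex.I) • h))) r =
      4 * (L (a + ((s : ℂ) + (r : ℂ) * Complex.I) • h)).reApplyInnerSelf h

/-- `u` is maximal plurisubharmonic in `Ω`: for every bounded open `G` with closure
contained in `Ω` and every `v` plurisubharmonic on `G` with
`limsup_{z → ξ, z ∈ G} v z ≤ u ξ` for all boundary points `ξ` of `G`, one has `v ≤ u`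
on `G`. -/
def IsMaximalPsh (Ω : Set H) (u : H → ℝ) : Prop :=
  ∀ G : Set H, IsOpen G → Bornology.IsBounded G → closure G ⊆ Ω →
    ∀ v : H → ℝ, IsPsh G v →
      (∀ ξ ∈ frontier G,
        Filter.limsup (fun z => (v z : EReal)) (nhdsWithin ξ G) ≤ (u ξ : EReal)) →
      ∀ z ∈ G, v z ≤ u z

section helpers
open Set MeasureTheory

lemma submean (f : ℝ × ℝ → ℝ) (U : Set (ℝ × ℝ)) (hU : IsOpen U) (hf : ContDiffOn ℝ 2 f U)
    (hd : ∀ p : ℝ × ℝ, p.1 ^ 2 + p.2 ^ 2 ≤ 1 → p ∈ U) (κ : ℝ)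
    (hlap : ∀ p : ℝ × ℝ, p.1 ^ 2 + p.2 ^ 2 ≤ 1 →
      4 * κ ≤ fderiv ℝ (fderiv ℝ f) p (1, 0) (1, 0) + fderiv ℝ (fderiv ℝ f) p (0, 1) (0, 1)) :
    2 * Real.pi * (f 0 + κ) ≤ ∫ θ in (0:ℝ)..(2 * Real.pi), f (Real.cos θ, Real.sin θ) := by
  have hπ : (0:ℝ) ≤ 2 * Real.pi := by positivity
  set D := fderiv ℝ f with hD
  have hDc : ContDiffOn ℝ 1 D U := hf.fderiv_of_isOpen hU (by norm_num)
  have hfd : ∀ p ∈ U, HasFDerivAt f (D p) p := fun p hp =>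
    ((hf.differentiableOn (by norm_num)).differentiableAt (hU.mem_nhds hp)).hasFDerivAt
  have hDd : ∀ p ∈ U, HasFDerivAt D (fderiv ℝ D p) p := fun p hp =>
    ((hDc.differentiableOn (by norm_num)).differentiableAt (hU.mem_nhds hp)).hasFDerivAt
  let e : ℝ → ℝ × ℝ := fun θ => (Real.cos θ, Real.sin θ)
  let e' : ℝ → ℝ × ℝ := fun θ => (-Real.sin θ, Real.cos θ)
  have he : ∀ θ, HasDerivAt e (e' θ) θ := fun θ =>
    (Real.hasDerivAt_cos θ).prodMk (Real.hasDerivAt_sin θ)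
  have he' : ∀ θ, HasDerivAt e' (-e θ) θ := fun θ => by
    have := (Real.hasDerivAt_sin θ).neg.prodMk (Real.hasDerivAt_cos θ)
    simpa [e, e'] using this
  have hec : ContDiff ℝ 1 e := Real.contDiff_cos.prodMk Real.contDiff_sin
  have hec' : ContDiff ℝ 1 e' := Real.contDiff_sin.neg.prodMk Real.contDiff_cos
  let P : ℝ × ℝ → ℝ × ℝ := fun x => x.1 • e x.2
  have hPc : ContDiff ℝ 1 P := contDiff_fst.smul (hec.comp contDiff_snd)
  let V := P ⁻¹' U
  have hV : IsOpen V := hU.preimage hPc.continuous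
  have hPn : ∀ x : ℝ × ℝ, x.1 ∈ Icc (0:ℝ) 1 → (P x).1 ^ 2 + (P x).2 ^ 2 ≤ 1 := by
    intro x hx
    have : (P x).1 ^ 2 + (P x).2 ^ 2 = x.1 ^ 2 := by
      simp only [P, e, Prod.smul_fst, Prod.smul_snd, smul_eq_mul]
      linear_combination x.1 ^ 2 * Real.sin_sq_add_cos_sq x.2
    rw [this]; nlinarith [hx.1, hx.2]
  have hPV : ∀ x : ℝ × ℝ, x.1 ∈ Icc (0:ℝ) 1 → x ∈ V := fun x hx => hd _ (hPn x hx)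
  have hDP : ContDiffOn ℝ 1 (fun x => D (P x)) V := hDc.comp hPc.contDiffOn (fun x hx => hx)
  let R : ℝ × ℝ → ℝ := fun x => D (P x) (e x.2)
  let F : ℝ × ℝ → ℝ := fun x => x.1 * R x
  let G : ℝ × ℝ → ℝ := fun x => D (P x) (e' x.2)
  have hRc : ContDiffOn ℝ 1 R V := hDP.clm_apply (hec.comp contDiff_snd).contDiffOn
  have hFc : ContDiffOn ℝ 1 F V := contDiff_fst.contDiffOn.mul hRc
  have hGc : ContDiffOn ℝ 1 G V := hDP.clm_apply (hec'.comp contDiff_snd).contDiffOn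
  have hFd : ∀ x ∈ V, HasFDerivAt F (fderiv ℝ F x) x := fun p hp =>
    ((hFc.differentiableOn (by norm_num)).differentiableAt (hV.mem_nhds hp)).hasFDerivAt
  have hGd : ∀ x ∈ V, HasFDerivAt G (fderiv ℝ G x) x := fun p hp =>
    ((hGc.differentiableOn (by norm_num)).differentiableAt (hV.mem_nhds hp)).hasFDerivAt
  have hdiv : ∀ x ∈ V, fderiv ℝ F x (1, 0) + fderiv ℝ G x (0, 1) =
      x.1 * (fderiv ℝ D (P x) (1, 0) (1, 0) + fderiv ℝ D (P x) (0, 1) (0, 1)) := by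
    rintro ⟨τ, θ⟩ hx
    have h1 : HasDerivAt (fun t => F (t, θ)) (fderiv ℝ F (τ, θ) (1, 0)) τ :=
      (hFd _ hx).comp_hasDerivAt τ (f := fun t => (t, θ)) ((hasDerivAt_id' τ).prodMk (hasDerivAt_const τ θ))
    have h2 : HasDerivAt (fun t => G (τ, t)) (fderiv ℝ G (τ, θ) (0, 1)) θ :=
      (hGd _ hx).comp_hasDerivAt θ (f := fun t => (τ, t)) ((hasDerivAt_const θ τ).prodMk (hasDerivAt_id' θ))
    have h3 : HasDerivAt (fun t => D (P (t, θ))) (fderiv ℝ D (P (τ, θ)) (e θ)) τ := by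
      have := (hDd _ hx).comp_hasDerivAt τ (f := fun t => P (t, θ)) ((hasDerivAt_id' τ).smul_const (e θ))
      rw [one_smul] at this
      exact this
    have h4 : HasDerivAt (fun t => D (P (τ, t))) (fderiv ℝ D (P (τ, θ)) (τ • e' θ)) θ :=
      (hDd _ hx).comp_hasDerivAt θ ((he θ).const_smul τ)
    have h5 := (hasDerivAt_id τ).mul (h3.clm_apply (hasDerivAt_const τ (e θ)))
    have h6 := h4.clm_apply (he' θ)
    rw [h1.unique h5, h2.unique h6]
    have q1 : e θ = Real.cos θ • ((1, 0) : ℝ × ℝ) + Real.sin θ • ((0, 1) : ℝ × ℝ) := by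
      ext <;> simp [e]
    have q2 : e' θ = (-Real.sin θ) • ((1, 0) : ℝ × ℝ) + Real.cos θ • ((0, 1) : ℝ × ℝ) := by
      ext <;> simp [e']
    generalize fderiv ℝ D (P (τ, θ)) = B
    rw [q1, q2]
    simp only [map_add, map_smul, map_neg, map_zero, add_apply, smul_apply,
      smul_eq_mul, id]
    linear_combination τ * (B (1,0) (1,0) + B (0,1) (0,1)) * Real.sin_sq_add_cos_sq θ
  have hN : ∀ t ∈ Ioo (0:ℝ) 1, 4 * Real.pi * κ * t ≤ ∫ θ in (0:ℝ)..(2 * Real.pi), R (t, θ) := by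
    intro t ht
    have hsub : (uIcc (0:ℝ) t ×ˢ uIcc (0:ℝ) (2 * Real.pi)) ⊆ V := by
      rintro x ⟨hx, -⟩
      rw [uIcc_of_le ht.1.le] at hx
      exact hPV x ⟨hx.1, hx.2.trans ht.2.le⟩
    have hsub' : Ioo (min 0 t) (max 0 t) ×ˢ Ioo (min 0 (2 * Real.pi)) (max 0 (2 * Real.pi)) ⊆ V := by
      refine Subset.trans ?_ hsub
      exact prod_mono Ioo_subset_Icc_self Ioo_subset_Icc_self
    have hcont : ContinuousOn (fun x => fderiv ℝ F x (1, 0) + fderiv ℝ G x (0, 1)) V :=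
      ((hFc.continuousOn_fderiv_of_isOpen hV le_rfl).clm_apply continuousOn_const).add
        ((hGc.continuousOn_fderiv_of_isOpen hV le_rfl).clm_apply continuousOn_const)
    have key := integral2_divergence_prod_of_hasFDerivAt F G (fderiv ℝ F) (fderiv ℝ G) 0 0 t
      (2 * Real.pi) (hFc.continuousOn.mono hsub) (hGc.continuousOn.mono hsub)
      (fun x hx => hFd x (hsub' hx)) (fun x hx => hGd x (hsub' hx))
      ((hcont.mono hsub).integrableOn_compact (isCompact_uIcc.prod isCompact_uIcc))
    have hGp : ∀ x, G (x, 2 * Real.pi) = G (x, 0) := by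
      intro x; simp [G, P, e, e']
    simp only [hGp, sub_self, zero_add] at key
    have hF0 : ∀ y, F (0, y) = 0 := fun y => by simp [F]
    have hFt : ∀ y, F (t, y) = t * R (t, y) := fun y => rfl
    simp only [hF0, hFt, intervalIntegral.integral_zero, sub_zero,
      intervalIntegral.integral_const_mul] at key
    have hlow : ∫ x in (0:ℝ)..t, ∫ y in (0:ℝ)..(2 * Real.pi), 4 * κ * x ≤ 
        ∫ x in (0:ℝ)..t, ∫ y in (0:ℝ)..(2 * Real.pi), 
          (fderiv ℝ F (x, y) (1, 0) + fderiv ℝ G (x, y) (0, 1)) := by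
      have hcV : ContinuousOn (Function.uncurry fun x y => 
          (fderiv ℝ F (x, y) (1, 0) + fderiv ℝ G (x, y) (0, 1))) 
          (uIcc (0:ℝ) t ×ˢ uIcc (0:ℝ) (2 * Real.pi)) := hcont.mono hsub
      apply intervalIntegral.integral_mono_on ht.1.le
      · apply Continuous.intervalIntegrable
        simp only [intervalIntegral.integral_const]
        fun_prop
      · have := (hcV.integrableOn_compact (μ := volume.prod volume) 
          (isCompact_uIcc.prod isCompact_uIcc))
        rw [uIcc_of_le ht.1.le, uIcc_of_le hπ, IntegrableOn, ← Measure.prod_restrict] at this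
        have := this.integral_prod_left
        rw [intervalIntegrable_iff_integrableOn_Icc_of_le ht.1.le]
        simp only [intervalIntegral.integral_of_le hπ, ← integral_Icc_eq_integral_Ioc]
        exact this
      · intro x hx
        apply intervalIntegral.integral_mono_on hπ
        · exact intervalIntegrable_const
        · apply ContinuousOn.intervalIntegrable
          refine ContinuousOn.comp hcont (f := fun y => (x, y)) (by fun_prop) ?_
          intro y _
          exact hPV (x, y) ⟨hx.1, hx.2.trans ht.2.le⟩
        · intro y _
          have hm : x ∈ Icc (0:ℝ) 1 := ⟨hx.1, hx.2.trans ht.2.le⟩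
          rw [hdiv _ (hPV (x, y) hm)]
          have := mul_le_mul_of_nonneg_left (hlap _ (hPn (x, y) hm)) hx.1
          simp only
          linarith
    rw [key] at hlow
    have hcalc : ∫ x in (0:ℝ)..t, ∫ y in (0:ℝ)..(2 * Real.pi), 4 * κ * x
        = 4 * Real.pi * κ * t ^ 2 := by
      have : ∀ x : ℝ, ∫ y in (0:ℝ)..(2 * Real.pi), 4 * κ * x = (8 * Real.pi * κ) * x := by
        intro x
        rw [intervalIntegral.integral_const, smul_eq_mul]; ring
      simp_rw [this]
      rw [intervalIntegral.integral_const_mul (8 * Real.pi * κ) (fun x => x), integral_id]; ring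
    rw [hcalc] at hlow
    have := ht.1
    refine le_of_mul_le_mul_left ?_ ht.1
    nlinarith
  have hRcI : ContinuousOn (Function.uncurry fun θ t => R (t, θ)) 
      (uIcc (0:ℝ) (2 * Real.pi) ×ˢ uIcc (0:ℝ) 1) := by
    refine hRc.continuousOn.comp (f := fun x : ℝ × ℝ => (x.2, x.1)) (by fun_prop) ?_
    rintro x ⟨-, hx⟩
    rw [uIcc_of_le zero_le_one] at hx
    exact hPV _ hx
  have hRint := (hRcI.integrableOn_compact (μ := volume.prod volume) 
          (isCompact_uIcc.prod isCompact_uIcc))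
  rw [uIcc_of_le zero_le_one, uIcc_of_le hπ, IntegrableOn, ← Measure.prod_restrict] at hRint
  have hftc : ∀ θ, ∫ t in (0:ℝ)..1, R (t, θ) = f (e θ) - f 0 := by
    intro θ
    have := intervalIntegral.integral_eq_sub_of_hasDerivAt (a := 0) (b := 1)
      (f := fun t => f (P (t, θ))) (f' := fun t => R (t, θ)) ?_ ?_
    · rw [this]; simp [P]
    · intro t ht
      rw [uIcc_of_le zero_le_one] at ht
      have := (hfd _ (hPV (t, θ) ht)).comp_hasDerivAt t (f := fun t => P (t, θ)) ((hasDerivAt_id' t).smul_const (e θ))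
      rw [one_smul] at this
      exact this
    · apply ContinuousOn.intervalIntegrable
      refine hRc.continuousOn.comp (f := fun t => (t, θ)) (by fun_prop) ?_
      intro t ht
      rw [uIcc_of_le zero_le_one] at ht
      exact hPV _ ht
  have hswap : ∫ θ in (0:ℝ)..(2 * Real.pi), ∫ t in (0:ℝ)..1, R (t, θ) = 
      ∫ t in (0:ℝ)..1, ∫ θ in (0:ℝ)..(2 * Real.pi), R (t, θ) := by
    simp only [intervalIntegral.integral_of_le hπ, intervalIntegral.integral_of_le zero_le_one,
      ← integral_Icc_eq_integral_Ioc]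
    exact integral_integral_swap hRint
  have hlow2 : ∫ t in (0:ℝ)..1, 4 * Real.pi * κ * t ≤ 
      ∫ t in (0:ℝ)..1, ∫ θ in (0:ℝ)..(2 * Real.pi), R (t, θ) := by
    apply intervalIntegral.integral_mono_on_of_le_Ioo zero_le_one
    · apply Continuous.intervalIntegrable
      fun_prop
    · have := hRint.integral_prod_right
      rw [intervalIntegrable_iff_integrableOn_Icc_of_le zero_le_one]
      simp only [intervalIntegral.integral_of_le hπ, ← integral_Icc_eq_integral_Ioc]
      exact this
    · exact hN
  rw [← hswap] at hlow2
  simp only [hftc] at hlow2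
  rw [intervalIntegral.integral_sub] at hlow2
  · rw [intervalIntegral.integral_const_mul (4 * Real.pi * κ) (fun x => x), integral_id,
      intervalIntegral.integral_const, smul_eq_mul] at hlow2
    linarith
  · apply ContinuousOn.intervalIntegrable
    refine hf.continuousOn.comp hec.continuous.continuousOn ?_
    intro y _
    exact hd _ (by simp [e])
  · exact intervalIntegrable_const

lemma lap_eq (f : ℝ × ℝ → ℝ) (U : Set (ℝ × ℝ)) (hU : IsOpen U) (hf : ContDiffOn ℝ 2 f U)
    (s r : ℝ) (hp : (s, r) ∈ U) :
    deriv (deriv (fun s' => f (s', r))) s + deriv (deriv (fun r' => f (s, r'))) r =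
    fderiv ℝ (fderiv ℝ f) (s, r) (1, 0) (1, 0) + fderiv ℝ (fderiv ℝ f) (s, r) (0, 1) (0, 1) := by
  have hDc : ContDiffOn ℝ 1 (fderiv ℝ f) U := hf.fderiv_of_isOpen hU (by norm_num)
  have hfd : ∀ p ∈ U, HasFDerivAt f (fderiv ℝ f p) p := fun p hp =>
    ((hf.differentiableOn (by norm_num)).differentiableAt (hU.mem_nhds hp)).hasFDerivAt
  have hDd : ∀ p ∈ U, HasFDerivAt (fderiv ℝ f) (fderiv ℝ (fderiv ℝ f) p) p := fun p hp =>
    ((hDc.differentiableOn (by norm_num)).differentiableAt (hU.mem_nhds hp)).hasFDerivAt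
  have a1 : ∀ t, HasDerivAt (fun t : ℝ => (t, r)) (1, 0) t := fun t =>
    (hasDerivAt_id' t).prodMk (hasDerivAt_const t r)
  have a2 : ∀ t, HasDerivAt (fun t : ℝ => (s, t)) (0, 1) t := fun t =>
    (hasDerivAt_const t s).prodMk (hasDerivAt_id' t)
  have h1 : deriv (fun s' => f (s', r)) =ᶠ[nhds s] fun t => fderiv ℝ f (t, r) (1, 0) := by
    have : ∀ᶠ t in nhds s, (t, r) ∈ U :=
      (by fun_prop : Continuous fun t : ℝ => (t, r)).continuousAt.eventually_mem (hU.mem_nhds hp)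
    filter_upwards [this] with t ht
    exact ((hfd _ ht).comp_hasDerivAt t (a1 t)).deriv
  have h2 : deriv (fun r' => f (s, r')) =ᶠ[nhds r] fun t => fderiv ℝ f (s, t) (0, 1) := by
    have : ∀ᶠ t in nhds r, (s, t) ∈ U :=
      (by fun_prop : Continuous fun t : ℝ => (s, t)).continuousAt.eventually_mem (hU.mem_nhds hp)
    filter_upwards [this] with t ht
    exact ((hfd _ ht).comp_hasDerivAt t (a2 t)).deriv
  have b1 : HasDerivAt (fun t => fderiv ℝ f (t, r)) (fderiv ℝ (fderiv ℝ f) (s, r) (1, 0)) s :=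
    (hDd _ hp).comp_hasDerivAt s (a1 s)
  have b2 : HasDerivAt (fun t => fderiv ℝ f (s, t)) (fderiv ℝ (fderiv ℝ f) (s, r) (0, 1)) r :=
    (hDd _ hp).comp_hasDerivAt r (a2 r)
  rw [h1.deriv_eq, h2.deriv_eq, (b1.clm_apply (hasDerivAt_const s _)).deriv,
    (b2.clm_apply (hasDerivAt_const r _)).deriv]
  simp

lemma fsDet₀_nonneg (A : H →L[ℂ] H) (x : H) : 0 ≤ fsDet₀ A x :=
  Real.iInf_nonneg fun _ => (Real.exp_pos _).le

lemma fsDet₀_le (A : H →L[ℂ] H) (hA : A.IsPositive) (x : H) (hx : ‖x‖ = 1) :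
    fsDet₀ A x ≤ A.reApplyInnerSelf x := by
  refine le_of_forall_pos_le_add fun ε hε => ?_
  have hb : BddBelow (range fun ε : {ε : ℝ // 0 < ε} => fsDet (A + (ε : ℝ) • 1) x) :=
    ⟨0, by rintro _ ⟨ε, rfl⟩; exact (Real.exp_pos _).le⟩
  refine (ciInf_le hb ⟨ε, hε⟩).trans ?_
  have h0 : 0 ≤ A.reApplyInnerSelf x := hA.2 x
  set s := A.reApplyInnerSelf x + ε with hs
  have hspos : 0 < s := by positivity
  unfold fsDet
  rw [← Real.le_log_iff_exp_le hspos]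
  set B : H →L[ℂ] H := A + (ε : ℝ) • 1 with hB
  have hε1 : (algebraMap ℝ (H →L[ℂ] H) ε) = (ε : ℝ) • 1 := Algebra.algebraMap_eq_smul_one ε
  have hA0 : 0 ≤ A := (ContinuousLinearMap.nonneg_iff_isPositive A).2 hA
  have hle : algebraMap ℝ (H →L[ℂ] H) ε ≤ B := by
    rw [hε1, hB]; exact le_add_of_nonneg_left hA0
  have h1p : (0 : H →L[ℂ] H) ≤ 1 :=
    (ContinuousLinearMap.nonneg_iff_isPositive _).2 ContinuousLinearMap.isPositive_one
  have hB0 : 0 ≤ B := add_nonneg hA0 (smul_nonneg hε.le h1p)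
  have hBsa : IsSelfAdjoint B := .of_nonneg hB0
  have hspec : ∀ t ∈ spectrum ℝ B, ε ≤ t := (algebraMap_le_iff_le_spectrum hBsa).1 hle
  have hmono : opLog B ≤ cfc (fun t : ℝ => s⁻¹ * t + (Real.log s - 1)) B := by
    unfold opLog
    refine cfc_mono ?_ ?_ ?_
    · intro t ht
      have ht0 : 0 < t := hε.trans_le (hspec t ht)
      have := Real.log_le_sub_one_of_pos (show 0 < s⁻¹ * t by positivity)
      rw [Real.log_mul (by positivity) ht0.ne', Real.log_inv] at this
      linarith
    · intro t ht
      exact (Real.continuousAt_log (hε.trans_le (hspec t ht)).ne').continuousWithinAt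
    · fun_prop
  rw [cfc_add_const _ _ _ (by fun_prop) hBsa, cfc_const_mul_id _ _ hBsa,
    Algebra.algebraMap_eq_smul_one] at hmono
  have := ((ContinuousLinearMap.le_def _ _).1 hmono).2 x
  simp only [ContinuousLinearMap.reApplyInnerSelf_apply, sub_apply, add_apply, smul_apply,
    inner_sub_left, inner_add_left, map_sub, map_add, hB, one_apply_eq_self,
    inner_smul_left_eq_smul, RCLike.smul_re, inner_self_eq_norm_sq, hx, smul_add] at this
  simp only [ContinuousLinearMap.reApplyInnerSelf_apply] at hs ⊢
  rw [hB]
  have h3 : s⁻¹ * s = 1 := inv_mul_cancel₀ hspos.ne'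
  rw [hs] at h3 this ⊢
  nlinarith

lemma norm_mean (w h : H) :
    IntervalIntegrable (fun θ : ℝ => ‖w + Complex.exp (θ * Complex.I) • h‖ ^ 2) volume
      0 (2 * Real.pi) ∧
    ∫ θ in (0:ℝ)..(2 * Real.pi), ‖w + Complex.exp (θ * Complex.I) • h‖ ^ 2 =
      2 * Real.pi * (‖w‖ ^ 2 + ‖h‖ ^ 2) := by
  refine ⟨Continuous.intervalIntegrable (by fun_prop) _ _, ?_⟩
  have : ∀ θ : ℝ, ‖w + Complex.exp (θ * Complex.I) • h‖ ^ 2 =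
      (‖w‖ ^ 2 + ‖h‖ ^ 2) + ((2 * (inner ℂ w h).re) * Real.cos θ
        + (- 2 * (inner ℂ w h).im) * Real.sin θ) := by
    intro θ
    rw [norm_add_sq (𝕜 := ℂ), norm_smul, Complex.norm_exp_ofReal_mul_I, inner_smul_right,
      Complex.exp_mul_I, ← Complex.ofReal_cos, ← Complex.ofReal_sin]
    simp only [RCLike.re_to_complex, Complex.mul_re, Complex.add_re, Complex.add_im,
      Complex.ofReal_re, Complex.ofReal_im, Complex.I_re, Complex.I_im, Complex.mul_im]
    ring
  simp_rw [this]
  generalize ‖w‖ ^ 2 + ‖h‖ ^ 2 = q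
  rw [intervalIntegral.integral_add, intervalIntegral.integral_add,
    intervalIntegral.integral_const_mul, intervalIntegral.integral_const_mul,
    integral_sin, integral_cos, intervalIntegral.integral_const]
  · simp
  all_goals exact Continuous.intervalIntegrable (by fun_prop) _ _

lemma v_submean (Ω : Set H) (hΩ : IsOpen Ω) (u : H → ℝ) (L : H → (H →L[ℂ] H))
    (hL : IsLeviForm Ω u L) (G : Set H) (hG : G ⊆ Ω) (c : ℝ) (a : H) (C : ℝ)
    (hlow : ∀ z ∈ G, ∀ h, c * ‖h‖ ^ 2 ≤ (L z).reApplyInnerSelf h)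
    (z : H) (hz : z ∈ G) (h : H) (hdisc : ∀ l : ℂ, ‖l‖ ≤ 1 → z + l • h ∈ G) :
    u z + c * (C - ‖z - a‖ ^ 2) ≤ (2 * Real.pi)⁻¹ *
      ∫ θ in (0:ℝ)..(2 * Real.pi), (u (z + Complex.exp (θ * Complex.I) • h)
        + c * (C - ‖z + Complex.exp (θ * Complex.I) • h - a‖ ^ 2)) := by
  obtain ⟨hC, hlap⟩ := hL.2 z (hG hz) h
  set f : ℝ × ℝ → ℝ := fun p => u (z + ((p.1 : ℂ) + (p.2 : ℂ) * Complex.I) • h) with hf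
  set U : Set (ℝ × ℝ) := {p : ℝ × ℝ | z + ((p.1 : ℂ) + (p.2 : ℂ) * Complex.I) • h ∈ Ω} with hUdef
  have hU : IsOpen U := hΩ.preimage (by fun_prop)
  have hd' : ∀ p : ℝ × ℝ, p.1 ^ 2 + p.2 ^ 2 ≤ 1 →
      z + ((p.1 : ℂ) + (p.2 : ℂ) * Complex.I) • h ∈ G := by
    intro p hp
    apply hdisc
    rw [Complex.norm_add_mul_I]
    exact Real.sqrt_le_one.2 hp
  have hd : ∀ p : ℝ × ℝ, p.1 ^ 2 + p.2 ^ 2 ≤ 1 → p ∈ U := fun p hp => hG (hd' p hp)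
  have hcs : ∀ θ : ℝ, Complex.exp (θ * Complex.I) =
      ((Real.cos θ : ℝ) : ℂ) + ((Real.sin θ : ℝ) : ℂ) * Complex.I := by
    intro θ; rw [Complex.exp_mul_I, ← Complex.ofReal_cos, ← Complex.ofReal_sin]
  have key := submean f U hU hC hd (c * ‖h‖ ^ 2) (by
    intro p hp
    have h1 := lap_eq f U hU hC p.1 p.2 (hd p hp)
    rw [← h1]
    have h2 := hlap p.1 p.2 (hd p hp)
    rw [hf]
    simp only at h2 ⊢
    rw [h2]
    exact mul_le_mul_of_nonneg_left (hlow _ (hd' p hp) h) (by norm_num))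
  have hfu : ∀ θ : ℝ, u (z + Complex.exp (θ * Complex.I) • h) = f (Real.cos θ, Real.sin θ) := by
    intro θ; rw [hcs]
  have hfi : IntervalIntegrable (fun θ => f (Real.cos θ, Real.sin θ)) volume 0 (2 * Real.pi) := by
    apply ContinuousOn.intervalIntegrable
    refine hC.continuousOn.comp (f := fun θ => (Real.cos θ, Real.sin θ)) (by fun_prop) ?_
    intro y _
    exact hd _ (by simp)
  obtain ⟨hn1, hn2⟩ := norm_mean (z - a) h
  have hw : ∀ θ : ℝ, z + Complex.exp (θ * Complex.I) • h - a =
    z - a + Complex.exp (θ * Complex.I) • h := fun θ => by abel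
  simp_rw [hfu, hw]
  have hf0 : f 0 = u z := by simp [hf]
  rw [intervalIntegral.integral_add hfi ((intervalIntegrable_const.sub hn1).const_mul c),
    intervalIntegral.integral_const_mul,
    intervalIntegral.integral_sub intervalIntegrable_const hn1, hn2,
    intervalIntegral.integral_const, smul_eq_mul, inv_mul_eq_div,
    le_div_iff₀ (by positivity)]
  rw [hf0] at key
  linarith

lemma main_aux (Ω : Set H) (hΩ : IsOpen Ω) (u : H → ℝ) (L : H → (H →L[ℂ] H))
    (hu : IsPsh Ω u) (hL : IsLeviForm Ω u L) (hLc : ContinuousOn L Ω)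
    (hmax : IsMaximalPsh Ω u) (a : H) (ha : a ∈ Ω) (c : ℝ) (hc : 0 < c)
    (hlow : ∀ h, c * ‖h‖ ^ 2 ≤ (L a).reApplyInnerSelf h) : False := by
  have hev : ∀ᶠ z in nhds a, z ∈ Ω ∧ ‖L z - L a‖ < c / 2 := by
    refine Filter.Eventually.and (hΩ.mem_nhds ha) ?_
    have := (hLc.continuousAt (hΩ.mem_nhds ha)).eventually (Metric.ball_mem_nhds (L a) (half_pos hc))
    filter_upwards [this] with z hz
    rwa [dist_eq_norm] at hz
  obtain ⟨r, hr, hball⟩ := Metric.nhds_basis_closedBall.eventually_iff.1 hev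
  have hlow' : ∀ z ∈ Metric.ball a r, ∀ h, c / 2 * ‖h‖ ^ 2 ≤ (L z).reApplyInnerSelf h := by
    intro z hz h
    have h1 := (hball (Metric.ball_subset_closedBall hz)).2
    have h2 := hlow h
    have h3 : (L z).reApplyInnerSelf h = (L a).reApplyInnerSelf h + (L z - L a).reApplyInnerSelf h := by
      simp [ContinuousLinearMap.reApplyInnerSelf_apply, inner_sub_left]
    have h4 : |(L z - L a).reApplyInnerSelf h| ≤ c / 2 * ‖h‖ ^ 2 := by
      rw [ContinuousLinearMap.reApplyInnerSelf_apply]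
      calc _ ≤ ‖inner ℂ ((L z - L a) h) h‖ := RCLike.abs_re_le_norm _
        _ ≤ ‖(L z - L a) h‖ * ‖h‖ := norm_inner_le_norm _ _
        _ ≤ (‖L z - L a‖ * ‖h‖) * ‖h‖ := by gcongr; exact ContinuousLinearMap.le_opNorm _ _
        _ ≤ (c / 2 * ‖h‖) * ‖h‖ := by gcongr
        _ = _ := by ring
    have := abs_le.1 h4
    linarith [this.1]
  have hcl : Metric.closedBall a r ⊆ Ω := fun z hz => (hball hz).1
  have hG : Metric.ball a r ⊆ Ω := Metric.ball_subset_closedBall.trans hcl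
  have husc : UpperSemicontinuousOn (fun z => u z + c / 2 * (r ^ 2 - ‖z - a‖ ^ 2)) Ω :=
    hu.1.add ((by fun_prop : Continuous fun z => c / 2 * (r ^ 2 - ‖z - a‖ ^ 2)
      ).upperSemicontinuous.upperSemicontinuousOn Ω)
  have hv := hmax (Metric.ball a r) Metric.isOpen_ball Metric.isBounded_ball
    (Metric.closure_ball_subset_closedBall.trans hcl)
    (fun z => u z + c / 2 * (r ^ 2 - ‖z - a‖ ^ 2))
    ⟨husc.mono hG, fun z hz h hdisc =>
      v_submean Ω hΩ u L hL _ hG (c / 2) a (r ^ 2) hlow' z hz h hdisc⟩ ?_ a (Metric.mem_ball_self hr)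
  · simp only [sub_self, norm_zero] at hv
    have : 0 < c / 2 * r ^ 2 := by positivity
    linarith
  · intro ξ hξ
    have hs : ‖ξ - a‖ = r := by
      have := Metric.frontier_ball_subset_sphere hξ
      rwa [mem_sphere_iff_norm] at this
    have hξΩ : ξ ∈ Ω := hcl (by rw [mem_closedBall_iff_norm, hs])
    refine le_of_forall_gt fun b hb => ?_
    obtain ⟨y, hy1, hy2⟩ := EReal.lt_iff_exists_real_btwn.1 hb
    refine lt_of_le_of_lt ?_ hy2
    have h1 := husc ξ hξΩ y (by simp [hs]; exact_mod_cast hy1)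
    refine Filter.limsup_le_of_le (by isBoundedDefault) ?_
    filter_upwards [h1.filter_mono (nhdsWithin_mono ξ hG)] with z hz
    exact_mod_cast hz.le

end helpers

/-- If `u` is maximal plurisubharmonic in `Ω` with norm-continuous Levi
form `L`, then the Fujii–Seo determinant density of `u` vanishes identically on `Ω`. -/
theorem maximality_implies_fsd_zero
    (Ω : Set H) (hΩ : IsOpen Ω) (u : H → ℝ) (L : H → (H →L[ℂ] H))
    (hu : IsPsh Ω u) (hL : IsLeviForm Ω u L) (hLc : ContinuousOn L Ω)
    (hmax : IsMaximalPsh Ω u) :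
    ∀ a ∈ Ω, (⨅ x : {x : H // ‖x‖ = 1}, fsDet₀ (L a) (x : H)) = 0 := by
  intro a ha
  have hnn : 0 ≤ ⨅ x : {x : H // ‖x‖ = 1}, fsDet₀ (L a) (x : H) :=
    Real.iInf_nonneg fun x => fsDet₀_nonneg _ _
  by_contra hne
  set c := ⨅ x : {x : H // ‖x‖ = 1}, fsDet₀ (L a) (x : H) with hcdef
  have hc : 0 < c := lt_of_le_of_ne hnn (Ne.symm hne)
  refine main_aux Ω hΩ u L hu hL hLc hmax a ha c hc fun h => ?_
  by_cases h0 : h = 0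
  · simp [h0, ContinuousLinearMap.reApplyInnerSelf_apply]
  have hn : 0 < ‖h‖ := norm_pos_iff.2 h0
  have hunit : ‖((‖h‖⁻¹ : ℝ) : ℂ) • h‖ = 1 := by
    rw [norm_smul, Complex.norm_real, norm_inv, norm_norm, inv_mul_cancel₀ hn.ne']
  have hle : c ≤ fsDet₀ (L a) (((‖h‖⁻¹ : ℝ) : ℂ) • h) :=
    ciInf_le (f := fun x : {x : H // ‖x‖ = 1} => fsDet₀ (L a) (x : H))
      ⟨0, by rintro _ ⟨x, rfl⟩; exact fsDet₀_nonneg _ _⟩ ⟨_, hunit⟩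
  have h2 := hle.trans (fsDet₀_le (L a) (hL.1 a ha) _ hunit)
  rw [ContinuousLinearMap.reApplyInnerSelf_smul, Complex.norm_real, norm_inv, norm_norm, inv_pow,
    inv_mul_eq_div, le_div_iff₀ (by positivity)] at h2
  exact h2
end
end

section
/- Let H be a complex Hilbert space and let A be a bounded positive operator on H with 0 ∈ σ(A). Define u(z) := re⟪A z, z⟫. Then for every bounded open set G ⊂ H with 0 ∈ G, the infimum over ξ in the boundary of G of u(ξ) equals 0. -/
noncomputable section

open ContinuousLinearMap

variable {H : Type*} [NormedAddCommGroup H] [InnerProductSpace ℂ H] [CompleteSpace H]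

/-- If `A` is positive with `0 ∈ σ(A)` and `u z = re⟪A z, z⟫`, then for
every bounded open set `G` containing `0`, the infimum of `u` over the boundary of `G`
equals `0`. -/
theorem quadratic_boundary_infimum_zero
    (A : H →L[ℂ] H) (hA : A.IsPositive) (h0 : (0 : ℝ) ∈ spectrum ℝ A) :
    ∀ G : Set H, IsOpen G → Bornology.IsBounded G → (0 : H) ∈ G →
      sInf ((fun ξ => A.reApplyInnerSelf ξ) '' frontier G) = 0 := by
  intro G hG hb h0G
  have hpos : ∀ x, 0 ≤ A.reApplyInnerSelf x := fun x => hA.2 x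
  set S := (fun ξ => A.reApplyInnerSelf ξ) '' frontier G with hS
  have hnn : 0 ≤ sInf S := by
    apply Real.sInf_nonneg
    rintro _ ⟨x, -, rfl⟩
    exact hpos x
  by_contra hne
  have hm : 0 < sInf S := lt_of_le_of_ne hnn (Ne.symm hne)
  set m := sInf S with hmdef
  have hle : ∀ ξ ∈ frontier G, m ≤ A.reApplyInnerSelf ξ := by
    intro ξ hξ
    exact csInf_le ⟨0, by rintro _ ⟨x, -, rfl⟩; exact hpos x⟩ ⟨ξ, hξ, rfl⟩
  obtain ⟨R, hR0, hR⟩ := hb.closure.exists_pos_norm_le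
  have key : ∀ x : H, m / R ^ 2 * ‖x‖ ^ 2 ≤ A.reApplyInnerSelf x := by
    intro x
    by_cases hx : x = 0
    · subst hx; simpa using hpos 0
    have hxn : 0 < ‖x‖ := norm_pos_iff.mpr hx
    have hc : Continuous (fun t : ℝ => ((t : ℂ) • x)) := by fun_prop
    have hne : (frontier G ∩ Set.range (fun t : ℝ => ((t : ℂ) • x))).Nonempty := by
      by_contra hemp
      rw [Set.not_nonempty_iff_eq_empty] at hemp
      have hcl : IsClopen ((fun t : ℝ => ((t : ℂ) • x)) ⁻¹' G) := by
        refine ⟨?_, hG.preimage hc⟩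
        have : (fun t : ℝ => ((t : ℂ) • x)) ⁻¹' G = (fun t : ℝ => ((t : ℂ) • x)) ⁻¹' closure G := by
          ext t
          refine ⟨fun h => subset_closure h, fun h => ?_⟩
          by_contra h'
          have : (t : ℂ) • x ∈ (frontier G ∩ Set.range (fun t : ℝ => ((t : ℂ) • x))) := by
            rw [hG.frontier_eq]
            exact ⟨⟨h, h'⟩, t, rfl⟩
          rw [hemp] at this
          exact this
        rw [this]
        exact isClosed_closure.preimage hc
      have huniv := hcl.eq_univ ⟨0, by simpa using h0G⟩
      have h1 : ((R + 1) / ‖x‖ : ℝ) ∈ (fun t : ℝ => ((t : ℂ) • x)) ⁻¹' G := by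
        rw [huniv]; trivial
      have h2 := hR _ (subset_closure h1)
      rw [norm_smul, Complex.norm_real, Real.norm_of_nonneg (by positivity),
        div_mul_cancel₀ _ hxn.ne'] at h2
      linarith
    obtain ⟨_, hf, t, rfl⟩ := hne
    have h1 := hle _ hf
    have h2 := hR _ hf.1
    simp only [ContinuousLinearMap.reApplyInnerSelf_smul] at h1
    simp only [norm_smul] at h2
    have h3 : (‖(t : ℂ)‖ * ‖x‖) ^ 2 ≤ R ^ 2 := by gcongr
    rw [div_mul_eq_mul_div, div_le_iff₀ (by positivity)]
    calc m * ‖x‖ ^ 2 ≤ (‖(t : ℂ)‖ ^ 2 * A.reApplyInnerSelf x) * ‖x‖ ^ 2 := by gcongr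
      _ = A.reApplyInnerSelf x * (‖(t : ℂ)‖ * ‖x‖) ^ 2 := by ring
      _ ≤ _ := by gcongr; exact hpos x
  have hc : 0 < m / R ^ 2 := by positivity
  have hunit : IsUnit A := by
    refine ContinuousLinearMap.isUnit_of_forall_le_norm_inner_map A
      (c := ⟨m / R ^ 2, hc.le⟩) hc (fun x => ?_)
    have := key x
    rw [ContinuousLinearMap.reApplyInnerSelf_apply] at this
    have h2 := (this.trans (RCLike.re_le_norm _))
    change ‖x‖ ^ 2 * (m / R ^ 2) ≤ _
    linarith
  exact (spectrum.zero_notMem_iff ℝ).mpr hunit h0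
end
end
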